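/- arXiv:1512.01201 — 11 statements merged into one kernel-verified Lean document; each statement's English description precedes it below -/
import Mathlib

section
/- (Definition/Proposition 3.1, elementary form) Let k be a finite field of cardinality q and characteristic p, and let Σ be a set of prime numbers. The following are equivalent: (1) there exists an integer n ≥ 1 such that for every finite family of pairs (ℓ_1, j_1), …, (ℓ_r, j_r) with each ℓ_i a prime in Σ ∖ {p} and each j_i ≥ 1, n does not divide the least common multiple of the multiplicative orders of q modulo ℓ_i^{j_i}; (2) there exist a prime number ℓ₀ and an integer N₀ ≥ 0 such that for every prime ℓ ∈ Σ ∖ {p} and every integer j ≥ 1, ℓ₀^{N₀} does not divide the multiplicative order of q modulo ℓ^j; (3) there exist a prime number ℓ₀ with ℓ₀ ∉ Σ ∖ {p} and an integer N₀ ≥ 0 such that for every prime ℓ ∈ Σ ∖ {p}, ℓ₀^{N₀} does not divide the multiplicative order of p modulo ℓ. -/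
theorem aux_pow_one (n a e : ℕ) : ((a : ZMod n)) ^ e = 1 ↔ (n : ℤ) ∣ (a : ℤ) ^ e - 1 := by
  rw [← ZMod.intCast_eq_intCast_iff_dvd_sub]
  push_cast
  exact eq_comm

theorem aux_pow_dvd_lcm (l N : ℕ) (hl : l.Prime) (s : Finset (ℕ × ℕ)) (g : ℕ × ℕ → ℕ)
    (h : l ^ (N + 1) ∣ s.lcm g) : ∃ x ∈ s, l ^ (N + 1) ∣ g x := by
  classical
  induction s using Finset.induction_on with
  | empty =>
    simp only [Finset.lcm_empty] at h
    have h1 := Nat.dvd_one.1 h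
    have : 1 < l ^ (N + 1) := Nat.one_lt_pow (by omega) hl.one_lt
    omega
  | insert a s ha ih =>
    rw [Finset.lcm_insert] at h
    have key : l ^ (N + 1) ∣ g a ∨ l ^ (N + 1) ∣ s.lcm g := by
      by_cases h0 : g a = 0
      · left; rw [h0]; exact dvd_zero _
      by_cases h1 : s.lcm g = 0
      · right; rw [h1]; exact dvd_zero _
      have h' : l ^ (N + 1) ∣ Nat.lcm (g a) (s.lcm g) := h
      rw [hl.pow_dvd_iff_le_factorization (Nat.lcm_ne_zero h0 h1),
        Nat.factorization_lcm h0 h1, Finsupp.sup_apply, le_sup_iff] at h'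
      rw [hl.pow_dvd_iff_le_factorization h0, hl.pow_dvd_iff_le_factorization h1]
      exact h'
    rcases key with hk | hk
    · exact ⟨a, Finset.mem_insert_self _ _, hk⟩
    · obtain ⟨x, hx, hx'⟩ := ih hk
      exact ⟨x, Finset.mem_insert_of_mem hx, hx'⟩

theorem aux_lift (l a j : ℕ) (hj : 1 ≤ j) :
    orderOf (a : ZMod (l ^ j)) ∣ orderOf (a : ZMod l) * l ^ (j - 1) := by
  rw [orderOf_dvd_iff_pow_eq_one, aux_pow_one, pow_mul]
  have h1 := (aux_pow_one l a _).1 (pow_orderOf_eq_one (a : ZMod l))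
  have h2 := dvd_sub_pow_of_dvd_sub h1 (j - 1)
  rw [one_pow, Nat.sub_add_cancel hj] at h2
  exact_mod_cast h2

theorem aux_unbounded (l q N : ℕ) (hl : l.Prime) (hq : 2 ≤ q) (hc : Nat.Coprime q l) :
    ∃ j, 1 ≤ j ∧ l ^ N ∣ orderOf (q : ZMod (l ^ j)) := by
  by_contra! hcon
  set M := (l - 1) * l ^ N with hM
  have hl2 := hl.two_le
  have hMpos : M ≠ 0 := by
    rw [hM]; exact Nat.mul_ne_zero (by omega) (pow_ne_zero _ (by omega))
  have hqM : 1 < q ^ M := Nat.one_lt_pow hMpos hq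
  have hj : 1 ≤ q ^ M := by omega
  have hd : orderOf (q : ZMod (l ^ (q ^ M))) ∣ (l - 1) * l ^ (q ^ M - 1) := by
    rw [orderOf_dvd_iff_pow_eq_one, mul_comm, ← Nat.totient_prime_pow hl (by omega)]
    have := ZMod.pow_totient (ZMod.unitOfCoprime q (hc.pow_right (q ^ M)))
    have h2 := congrArg Units.val this
    rwa [Units.val_pow_eq_pow_val, ZMod.coe_unitOfCoprime, Units.val_one] at h2
  have hn := hcon _ hj
  have hdM : orderOf (q : ZMod (l ^ (q ^ M))) ∣ M := by
    obtain ⟨x, y, hx, hy, hxy⟩ := (Nat.dvd_mul).1 hd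
    obtain ⟨b, hb, rfl⟩ := (Nat.dvd_prime_pow hl).1 hy
    rw [← hxy]
    refine mul_dvd_mul hx (pow_dvd_pow _ ?_)
    by_contra! hb'
    exact hn (hxy ▸ (pow_dvd_pow l hb'.le).mul_left x)
  rw [orderOf_dvd_iff_pow_eq_one, aux_pow_one] at hdM
  have h3 : l ^ (q ^ M) ∣ q ^ M - 1 := by
    zify [hj]
    exact_mod_cast hdM
  have h4 := Nat.le_of_dvd (by omega) h3
  have h5 := Nat.lt_pow_self (n := q ^ M) hl.one_lt
  omega

/-- **Definition/Proposition 3.1 (elementary form).** For a finite field `k` of cardinality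
`q = p ^ f` and a set `S` of prime numbers, the three elementary conditions characterizing
`k`-smallness of `S` are equivalent. -/
theorem small_set_characterizations
    (p q f : ℕ) (hp : p.Prime) (hf : 0 < f) (hq : q = p ^ f) (S : Set ℕ) :
    ((∃ n : ℕ, 1 ≤ n ∧ ∀ s : Finset (ℕ × ℕ),
        (∀ x ∈ s, x.1.Prime ∧ x.1 ∈ S ∧ x.1 ≠ p ∧ 1 ≤ x.2) →
        ¬ n ∣ s.lcm (fun x => orderOf ((q : ZMod (x.1 ^ x.2))))) ↔
      (∃ ℓ₀ N₀ : ℕ, ℓ₀.Prime ∧ ∀ ℓ ∈ S, ℓ.Prime → ℓ ≠ p → ∀ j : ℕ, 1 ≤ j →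
        ¬ ℓ₀ ^ N₀ ∣ orderOf ((q : ZMod (ℓ ^ j))))) ∧
    ((∃ ℓ₀ N₀ : ℕ, ℓ₀.Prime ∧ ∀ ℓ ∈ S, ℓ.Prime → ℓ ≠ p → ∀ j : ℕ, 1 ≤ j →
        ¬ ℓ₀ ^ N₀ ∣ orderOf ((q : ZMod (ℓ ^ j)))) ↔
      (∃ ℓ₀ N₀ : ℕ, ℓ₀.Prime ∧ ¬ (ℓ₀ ∈ S ∧ ℓ₀ ≠ p) ∧ ∀ ℓ ∈ S, ℓ.Prime → ℓ ≠ p →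
        ¬ ℓ₀ ^ N₀ ∣ orderOf ((p : ZMod ℓ)))) := by
  constructor
  · constructor
    · rintro ⟨n, hn, h⟩
      by_contra! hcon
      choose! L hLS hLp hLne J hJ hdvd using fun l N => hcon l N
      refine h (n.primeFactors.image
        fun l => (L l (n.factorization l), J l (n.factorization l))) ?_ ?_
      · intro x hx
        obtain ⟨l, hl, rfl⟩ := Finset.mem_image.1 hx
        have hlp := Nat.prime_of_mem_primeFactors hl
        exact ⟨hLp _ _ hlp, hLS _ _ hlp, hLne _ _ hlp, hJ _ _ hlp⟩
      · refine (Nat.dvd_iff_prime_pow_dvd_dvd _ _).2 ?_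
        intro l k hl hk
        by_cases hln : l ∣ n
        · have hmem : l ∈ n.primeFactors := Nat.mem_primeFactors.2 ⟨hl, hln, by omega⟩
          have hk' := (hl.pow_dvd_iff_le_factorization (by omega)).1 hk
          refine (pow_dvd_pow l hk').trans ((hdvd l (n.factorization l) hl).trans ?_)
          exact Finset.dvd_lcm (f := fun x : ℕ × ℕ => orderOf ((q : ZMod (x.1 ^ x.2))))
            (Finset.mem_image_of_mem
              (fun l => (L l (n.factorization l), J l (n.factorization l))) hmem)
        · have : k = 0 := by
            by_contra hk0
            exact hln ((dvd_pow_self l hk0).trans hk)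
          simp [this]
    · rintro ⟨l, N, hl, h⟩
      refine ⟨l ^ (N + 1), Nat.pos_of_ne_zero (pow_ne_zero _ hl.ne_zero), ?_⟩
      intro s hs hd
      obtain ⟨x, hx, hxd⟩ := aux_pow_dvd_lcm l N hl s _ hd
      obtain ⟨h1, h2, h3, h4⟩ := hs x hx
      exact h x.1 h2 h1 h3 x.2 h4 ((pow_dvd_pow l (Nat.le_succ N)).trans hxd)
  · constructor
    · rintro ⟨l, N, hl, h⟩
      refine ⟨l, N + f.factorization l, hl, ?_, ?_⟩
      · rintro ⟨hlS, hlp⟩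
        have hq2 : 2 ≤ q := by
          rw [hq]; exact Nat.one_lt_pow hf.ne' hp.one_lt
        have hc : Nat.Coprime q l := by
          rw [hq]; exact Nat.Coprime.pow_left _ ((Nat.coprime_primes hp hl).2 (Ne.symm hlp))
        obtain ⟨j, hj, hd⟩ := aux_unbounded l q N hl hq2 hc
        exact h l hlS hl hlp j hj hd
      · intro r hrS hr hrp hd
        apply h r hrS hr hrp 1 le_rfl
        rw [pow_one]
        have h1 : orderOf (p : ZMod r) ∣ f * orderOf (q : ZMod r) := by
          rw [orderOf_dvd_iff_pow_eq_one, pow_mul, ← Nat.cast_pow, ← hq]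
          exact pow_orderOf_eq_one _
        have h2 := hd.trans h1
        by_cases h0 : orderOf (q : ZMod r) = 0
        · rw [h0]; exact dvd_zero _
        rw [hl.pow_dvd_iff_le_factorization (Nat.mul_ne_zero hf.ne' h0),
          Nat.factorization_mul hf.ne' h0, Finsupp.add_apply] at h2
        rw [hl.pow_dvd_iff_le_factorization h0]
        omega
    · rintro ⟨l, N, hl, hlS, h⟩
      refine ⟨l, N, hl, ?_⟩
      intro r hrS hr hrp j hj hd
      have hne : l ≠ r := by
        rintro rfl
        exact hlS ⟨hrS, hrp⟩
      apply h r hrS hr hrp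
      have hc : Nat.Coprime (l ^ N) (r ^ (j - 1)) :=
        Nat.Coprime.pow _ _ ((Nat.coprime_primes hl hr).2 hne)
      have h1 := hc.dvd_of_dvd_mul_right (hd.trans (aux_lift r q j hj))
      refine h1.trans ?_
      rw [hq, Nat.cast_pow]
      exact orderOf_pow_dvd f
end

section
/- (Proposition 3.3) Let k be a finite field of cardinality q and characteristic p, and let Σ be a set of prime numbers. Then: (a) if Primes ∖ Σ is finite, then Σ is k-large; (b) if Σ is k-large, then Σ is not k-small (i.e., Σ and Primes ∖ Σ are never both k-small); (c) if Σ is not k-small, then Σ is infinite. -/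
/-- `S` is `k`-small, for `k` a finite field of cardinality `q` and characteristic `p`:
there exist a prime `ℓ₀` and `N₀ ≥ 0` such that for every prime `ℓ ∈ S ∖ {p}` and every
`j ≥ 1`, `ℓ₀ ^ N₀` does not divide the multiplicative order of `q` modulo `ℓ ^ j`. -/
def IsSmallFor (q p : ℕ) (S : Set ℕ) : Prop :=
  ∃ ℓ₀ N₀ : ℕ, ℓ₀.Prime ∧ ∀ ℓ ∈ S, ℓ.Prime → ℓ ≠ p → ∀ j : ℕ, 1 ≤ j →
    ¬ ℓ₀ ^ N₀ ∣ orderOf ((q : ZMod (ℓ ^ j)))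

/-- `S` is `k`-large if the complementary set of primes is `k`-small. -/
def IsLargeFor (q p : ℕ) (S : Set ℕ) : Prop :=
  IsSmallFor q p {ℓ : ℕ | ℓ.Prime ∧ ℓ ∉ S}

lemma small_of_finite (p q f : ℕ) (hp : p.Prime) (hq : q = p ^ f) (T : Set ℕ)
    (hT : T.Finite) : IsSmallFor q p T := by
  obtain ⟨B, hB⟩ := hT.bddAbove
  obtain ⟨r, hr, hrp⟩ := Nat.exists_infinite_primes (B + 1)
  refine ⟨r, 1, hrp, ?_⟩
  intro l hl hlp hne j hj hd
  have hlB : l ≤ B := hB hl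
  have hcop : Nat.Coprime q (l ^ j) := by
    rw [hq]
    exact Nat.Coprime.pow _ _ ((Nat.coprime_primes hp hlp).2 (Ne.symm hne))
  have h1 : (q : ZMod (l ^ j)) ^ Nat.totient (l ^ j) = 1 := by
    have := (ZMod.natCast_eq_natCast_iff _ _ _).2 (Nat.ModEq.pow_totient hcop)
    simpa using this
  have h2 : r ∣ Nat.totient (l ^ j) := by
    rw [pow_one] at hd
    exact hd.trans (orderOf_dvd_of_pow_eq_one h1)
  rw [Nat.totient_prime_pow hlp (by omega)] at h2
  rcases (hrp.dvd_mul).1 h2 with h | h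
  · have := Nat.le_of_dvd hlp.pos (hrp.dvd_of_dvd_pow h)
    omega
  · have := Nat.le_of_dvd (by have := hlp.two_le; omega) h
    omega

lemma exists_prime_order (p q f : ℕ) (hp : p.Prime) (hf : 0 < f) (hq : q = p ^ f) (k : ℕ)
    (hk : 1 < k) :
    ∃ l : ℕ, l.Prime ∧ l ≠ p ∧ ∃ j : ℕ, 1 ≤ j ∧ k ∣ orderOf (q : ZMod (l ^ j)) := by
  have hq2 : 2 ≤ q := by
    rw [hq]; exact hp.two_le.trans (Nat.le_self_pow hf.ne' p)
  have hc := Polynomial.sub_one_lt_natAbs_cyclotomic_eval (n := k) (q := q) hk (by omega)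
  obtain ⟨l, hl, hld⟩ := Nat.exists_prime_and_dvd
    (n := ((Polynomial.cyclotomic k ℤ).eval (q : ℤ)).natAbs) (by omega)
  haveI : Fact l.Prime := ⟨hl⟩
  have hroot : (Polynomial.cyclotomic k (ZMod l)).IsRoot (q : ZMod l) := by
    have h1 : ((((Polynomial.cyclotomic k ℤ).eval (q : ℤ) : ℤ)) : ZMod l) = 0 :=
      (ZMod.intCast_zmod_eq_zero_iff_dvd _ _).2 (Int.natCast_dvd.2 hld)
    rw [Polynomial.IsRoot.def, ← Polynomial.map_cyclotomic_int]
    have h2 := Polynomial.eval_intCast_map (Int.castRingHom (ZMod l))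
      (Polynomial.cyclotomic k ℤ) (q : ℤ)
    simp only [Int.cast_natCast] at h2
    rw [h2]
    simpa using h1
  obtain ⟨e, m, hm, hkm⟩ := Nat.exists_eq_pow_mul_and_not_dvd (n := k) (by omega) l hl.ne_one
  haveI : NeZero (m : ZMod l) := ⟨by rwa [Ne, ZMod.natCast_eq_zero_iff]⟩
  have hmpos : 0 < m := Nat.pos_of_ne_zero (by rintro rfl; simp at hm)
  have hprim : IsPrimitiveRoot (q : ZMod l) m := by
    rw [hkm] at hroot
    exact Polynomial.isRoot_cyclotomic_prime_pow_mul_iff_of_charP.1 hroot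
  refine ⟨l, hl, ?_, q ^ k, Nat.one_le_pow _ _ (by omega), ?_⟩
  · rintro rfl
    have := hprim.pow_eq_one
    rw [hq] at this
    simp [hf.ne', hmpos.ne'] at this
  set j := q ^ k with hj
  have hj1 : 1 ≤ j := Nat.one_le_pow _ _ (by omega)
  set o := orderOf (q : ZMod (l ^ j)) with ho
  -- m divides the order
  have hmo : m ∣ o := by
    rw [hprim.eq_orderOf]
    have := orderOf_map_dvd
      (ZMod.castHom (dvd_pow_self l (by omega : j ≠ 0)) (ZMod l) : ZMod (l ^ j) →* ZMod l)
      (q : ZMod (l ^ j))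
    simpa using this
  -- the order divides m * l ^ j
  have hom : o ∣ m * l ^ j := by
    apply orderOf_dvd_of_pow_eq_one
    have h1 : (l : ℤ) ∣ (q : ℤ) ^ m - 1 := by
      rw [← ZMod.intCast_zmod_eq_zero_iff_dvd]
      push_cast
      rw [hprim.pow_eq_one, sub_self]
    have h2 := dvd_sub_pow_of_dvd_sub (R := ℤ) (p := l) (a := (q : ℤ) ^ m) (b := 1) h1 j
    have h3 : ((l ^ j : ℕ) : ℤ) ∣ (q : ℤ) ^ (m * l ^ j) - 1 := by
      rw [pow_mul]
      refine dvd_trans ?_ (by simpa using h2)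
      push_cast
      exact pow_dvd_pow _ (Nat.le_succ j)
    rw [← ZMod.intCast_zmod_eq_zero_iff_dvd] at h3
    push_cast at h3
    exact sub_eq_zero.1 (by simpa using h3)
  have hopos : 0 < o := Nat.pos_of_dvd_of_pos hom (by have := hl.pos; positivity)
  have hlow : k < o := by
    have h1 : l ^ j ∣ q ^ o - 1 := by
      apply (Nat.modEq_iff_dvd' (Nat.one_le_pow _ _ (by omega))).1
      rw [← ZMod.natCast_eq_natCast_iff]
      push_cast
      exact (pow_orderOf_eq_one _).symm
    have h2 : 1 < q ^ o := Nat.one_lt_pow hopos.ne' (by omega)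
    have h3 := Nat.le_of_dvd (by omega) h1
    have h4 : j < l ^ j := Nat.lt_pow_self hl.one_lt
    exact (Nat.pow_lt_pow_iff_right (a := q) (by omega)).1 (by omega)
  obtain ⟨c, hc'⟩ := hmo
  rw [hc'] at hom hlow ⊢
  obtain ⟨i, -, rfl⟩ := (Nat.dvd_prime_pow hl).1 (Nat.dvd_of_mul_dvd_mul_left hmpos hom)
  rw [hkm, mul_comm] at hlow
  rw [hkm, mul_comm]
  have := Nat.lt_of_mul_lt_mul_left hlow
  exact mul_dvd_mul_left _ (pow_dvd_pow _ ((Nat.pow_lt_pow_iff_right hl.one_lt).1 this).le)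


/-- **Proposition 3.3.** For a set `S` of prime numbers and a finite field of cardinality
`q = p ^ f`: (a) if the set of primes outside `S` is finite then `S` is `k`-large;
(b) if `S` is `k`-large then `S` is not `k`-small; (c) if `S` is not `k`-small then `S`
is infinite. -/
theorem small_large_implications
    (p q f : ℕ) (hp : p.Prime) (hf : 0 < f) (hq : q = p ^ f)
    (S : Set ℕ) (hS : ∀ ℓ ∈ S, Nat.Prime ℓ) :
    ({ℓ : ℕ | ℓ.Prime ∧ ℓ ∉ S}.Finite → IsLargeFor q p S) ∧
    (IsLargeFor q p S → ¬ IsSmallFor q p S) ∧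
    (¬ IsSmallFor q p S → S.Infinite) := by
  refine ⟨small_of_finite p q f hp hq _, ?_, ?_⟩
  · rintro ⟨a, A, ha, hA⟩ ⟨b, B, hb, hB⟩
    have hk : 1 < a ^ (A + 1) * b ^ B :=
      lt_of_lt_of_le (Nat.one_lt_pow (by omega) ha.one_lt)
        (Nat.le_mul_of_pos_right _ (pow_pos hb.pos _))
    obtain ⟨l, hl, hlp, j, hj, hd⟩ := exists_prime_order p q f hp hf hq _ hk
    by_cases h : l ∈ S
    · exact hB l h hl hlp j hj ((Dvd.intro_left _ rfl).trans hd)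
    · exact hA l ⟨hl, h⟩ hl hlp j hj
        (((pow_dvd_pow a (Nat.le_succ A)).trans (Dvd.intro _ rfl)).trans hd)
  · intro h hfin
    exact h (small_of_finite p q f hp hq S hfin)
end

section
/- (Remark 3.4.2: an infinite 𝔽_p-small set of primes) Let p and r be prime numbers with r ≠ p and r ∤ p − 1. Then: (a) for every integer m ≥ 0 there exists a prime number ℓ that divides p^{r^{m+1}} − 1 but does not divide p^{r^m} − 1; consequently the set Σ := {ℓ prime : ℓ divides p^{r^m} − 1 for some m ≥ 0} is infinite; (b) for every prime s ∈ Σ and every integer j ≥ 1, every prime divisor of the multiplicative order of p modulo s^j belongs to {r, s}; consequently Σ is 𝔽_p-small (the prime ℓ₀ = p and N₀ = 1 witness the smallness condition), although Σ is infinite. -/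
theorem aux_exists (p r : ℕ) (hp : p.Prime) (hr : r.Prime) (hr1 : ¬ r ∣ (p - 1)) (m : ℕ) :
    ∃ ℓ : ℕ, ℓ.Prime ∧ ℓ ∣ p ^ r ^ (m + 1) - 1 ∧ ¬ ℓ ∣ p ^ r ^ m - 1 := by
  have hapos : 1 ≤ p ^ r ^ m := Nat.one_le_pow _ _ hp.pos
  have hN : (∑ i ∈ Finset.range r, (p ^ r ^ m) ^ i) ≠ 1 := by
    have h2 : ∑ i ∈ Finset.range 2, (p ^ r ^ m) ^ i ≤ ∑ i ∈ Finset.range r, (p ^ r ^ m) ^ i :=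
      Finset.sum_le_sum_of_subset (Finset.range_mono hr.two_le)
    rw [Finset.sum_range_succ, Finset.sum_range_one] at h2
    simp only [pow_zero, pow_one] at h2
    omega
  obtain ⟨ℓ, hℓ, hd⟩ := Nat.exists_prime_and_dvd hN
  refine ⟨ℓ, hℓ, ?_, ?_⟩
  · have h : (∑ i ∈ Finset.range r, (p ^ r ^ m) ^ i) * (p ^ r ^ m - 1)
        = p ^ r ^ (m + 1) - 1 := by
      rw [pow_succ r m, pow_mul]
      zify [hapos, Nat.one_le_pow r _ hapos]
      exact geom_sum_mul _ _
    rw [← h]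
    exact Dvd.dvd.mul_right hd _
  · intro hda
    have := Fact.mk hr
    have h1 : ((p : ZMod ℓ)) ^ r ^ m = 1 := by
      have := (ZMod.natCast_eq_zero_iff _ _).2 hda
      rw [Nat.cast_sub hapos] at this
      push_cast at this
      exact sub_eq_zero.1 this
    have h2 := (ZMod.natCast_eq_zero_iff _ _).2 hd
    push_cast at h2
    simp only [h1, one_pow, Finset.sum_const, Finset.card_range, nsmul_eq_mul, mul_one] at h2
    have h3 := (ZMod.natCast_eq_zero_iff _ _).1 h2
    have h4 : ℓ = r := (Nat.prime_dvd_prime_iff_eq hℓ hr).1 h3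
    subst h4
    rw [ZMod.pow_card_pow] at h1
    apply hr1
    rw [← ZMod.natCast_eq_zero_iff, Nat.cast_sub hp.one_le, h1]
    simp

theorem aux_order (p r s m j t : ℕ) (hp : p.Prime) (hr : r.Prime) (hs : s.Prime)
    (hd : s ∣ p ^ r ^ m - 1) (hj : 1 ≤ j) (ht : t.Prime)
    (h : t ∣ orderOf ((p : ZMod (s ^ j)))) : t = r ∨ t = s := by
  have hapos : 1 ≤ p ^ r ^ m := Nat.one_le_pow _ _ hp.pos
  obtain ⟨k, rfl⟩ : ∃ k, j = k + 1 := ⟨j - 1, by omega⟩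
  have h1 : (s : ℤ) ∣ (p : ℤ) ^ r ^ m - 1 := by
    have := Int.natCast_dvd_natCast.2 hd
    rw [Nat.cast_sub hapos] at this
    exact_mod_cast this
  have h2 := dvd_sub_pow_of_dvd_sub h1 k
  have h3 : (p : ZMod (s ^ (k + 1))) ^ (r ^ m * s ^ k) = 1 := by
    have h4 : ((s ^ (k + 1) : ℕ) : ℤ) ∣ ((p : ℤ) ^ r ^ m) ^ s ^ k - 1 ^ s ^ k := by
      exact_mod_cast h2
    replace h4 := (ZMod.intCast_zmod_eq_zero_iff_dvd _ _).2 h4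
    push_cast at h4
    rw [pow_mul]
    simpa using sub_eq_zero.1 h4
  have h5 := h.trans (orderOf_dvd_of_pow_eq_one h3)
  rcases (Nat.Prime.dvd_mul ht).1 h5 with h6 | h6
  · exact Or.inl ((Nat.prime_dvd_prime_iff_eq ht hr).1 (ht.dvd_of_dvd_pow h6))
  · exact Or.inr ((Nat.prime_dvd_prime_iff_eq ht hs).1 (ht.dvd_of_dvd_pow h6))

/-- **Remark 3.4.2.** Let `p`, `r` be primes with `r ≠ p` and `r ∤ p - 1`, and let
`S := {ℓ prime : ℓ ∣ p ^ (r ^ m) - 1 for some m ≥ 0}`. Then (a) for every `m` there is a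
prime dividing `p ^ (r ^ (m+1)) - 1` but not `p ^ (r ^ m) - 1`, so `S` is infinite; and
(b) every prime divisor of the multiplicative order of `p` modulo `s ^ j` (for `s ∈ S`,
`j ≥ 1`) lies in `{r, s}`; consequently `S` is `𝔽_p`-small, with witnesses `ℓ₀ = p`,
`N₀ = 1`, although `S` is infinite. -/
theorem infinite_small_set
    (p r : ℕ) (hp : p.Prime) (hr : r.Prime) (hrp : r ≠ p) (hr1 : ¬ r ∣ (p - 1)) :
    (∀ m : ℕ, ∃ ℓ : ℕ, ℓ.Prime ∧ ℓ ∣ p ^ r ^ (m + 1) - 1 ∧ ¬ ℓ ∣ p ^ r ^ m - 1) ∧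
    {ℓ : ℕ | ℓ.Prime ∧ ∃ m : ℕ, ℓ ∣ p ^ r ^ m - 1}.Infinite ∧
    (∀ s ∈ {ℓ : ℕ | ℓ.Prime ∧ ∃ m : ℕ, ℓ ∣ p ^ r ^ m - 1}, ∀ j : ℕ, 1 ≤ j →
      ∀ t : ℕ, t.Prime → t ∣ orderOf ((p : ZMod (s ^ j))) → t = r ∨ t = s) ∧
    (∀ ℓ ∈ {ℓ : ℕ | ℓ.Prime ∧ ∃ m : ℕ, ℓ ∣ p ^ r ^ m - 1}, ℓ ≠ p → ∀ j : ℕ, 1 ≤ j →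
      ¬ p ^ 1 ∣ orderOf ((p : ZMod (ℓ ^ j)))) ∧
    IsSmallFor p p {ℓ : ℕ | ℓ.Prime ∧ ∃ m : ℕ, ℓ ∣ p ^ r ^ m - 1} := by
  have hA := aux_exists p r hp hr hr1
  have hC : ∀ ℓ ∈ {ℓ : ℕ | ℓ.Prime ∧ ∃ m : ℕ, ℓ ∣ p ^ r ^ m - 1}, ℓ ≠ p → ∀ j : ℕ, 1 ≤ j →
      ¬ p ^ 1 ∣ orderOf ((p : ZMod (ℓ ^ j))) := by
    rintro ℓ ⟨hℓ, m, hd⟩ hne j hj h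
    rw [pow_one] at h
    rcases aux_order p r ℓ m j p hp hr hℓ hd hj hp h with h | h
    · exact hrp h.symm
    · exact hne h.symm
  refine ⟨hA, ?_, ?_, hC, ⟨p, 1, hp, fun ℓ hℓ _ => hC ℓ hℓ⟩⟩
  · choose f hf1 hf2 hf3 using hA
    have key : ∀ m n, m < n → f m ≠ f n := by
      intro m n hmn he
      apply hf3 n
      rw [← he]
      exact (hf2 m).trans (Nat.pow_sub_one_dvd_pow_sub_one p (pow_dvd_pow r hmn))
    refine Set.infinite_of_injective_forall_mem (f := f) ?_ (fun m => ⟨hf1 m, m + 1, hf2 m⟩)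
    intro m n he
    rcases lt_trichotomy m n with h | h | h
    · exact absurd he (key m n h)
    · exact h
    · exact absurd he.symm (key n m h)
  · rintro s ⟨hs, m, hd⟩ j hj t ht h
    exact aux_order p r s m j t hp hr hs hd hj ht h
end

section
/- (Proposition 3.6) Let k be a finite field of characteristic p and let K be a function field of one variable over k. Let Σ be a set of prime numbers such that Σ ∪ {p} is not the set of all prime numbers. Let f, g ∈ K ∖ k. Then there exist infinitely many places O of K such that f ∈ O, g ∈ O, and there exist a, b ∈ κ(O)^× of Σ'-primary order with f(O) = a + b·g(O) in the residue field κ(O). -/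
/-- A torsion element of a monoid whose (finite) order has all of its prime divisors
outside `S`; for `S' = Primes ∖ S` this says the element has `S'`-primary order. -/
def PrimaryOutside (S : Set ℕ) {M : Type*} [Monoid M] (x : M) : Prop :=
  IsOfFinOrder x ∧ ∀ ℓ : ℕ, ℓ.Prime → ℓ ∣ orderOf x → ℓ ∉ S

/-- `K` is a function field of one variable over the field `k`: a finitely generated
extension of transcendence degree 1 (there is a transcendental `t` with `K` finite over
`k(t)`) in which `k` is algebraically closed. -/
def IsFunctionFieldOneVar (k K : Type*) [Field k] [Field K] [Algebra k K] : Prop :=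
  (∃ t : K, Transcendental k t ∧
    FiniteDimensional (IntermediateField.adjoin k {t}) K) ∧
  ∀ x : K, IsAlgebraic k x → x ∈ (algebraMap k K).range

/-- In a function field, everything is algebraic over `k[h]` for transcendental `h`. -/
theorem aux_alg (k K : Type) [Field k] [Field K] [Algebra k K]
    (hK : IsFunctionFieldOneVar k K) (h : K) (hh : Transcendental k h) :
    Algebra.IsAlgebraic (Algebra.adjoin k {h}) K := by
  obtain ⟨⟨t, ht, hfin⟩, -⟩ := hK
  have h1 : Algebra.IsAlgebraic (IntermediateField.adjoin k {t}) K := inferInstance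
  rw [IntermediateField.isAlgebraic_adjoin_iff_top] at h1
  have h2 : Algebra.trdeg k K ≤ 1 := by
    simpa using Algebra.IsAlgebraic.trdeg_le_cardinalMk k ({t} : Set K)
  have h3 : AlgebraicIndependent k (fun _ : Unit => h) :=
    algebraicIndependent_unique_type_iff.mpr hh
  have h4 := h3.isTranscendenceBasis_of_trdeg_le_of_finite (by simpa using h2)
  have h5 := h4.isAlgebraic
  rwa [Set.range_const] at h5

/-- Roots of unity annihilated by a fixed nonzero polynomial over `k` have bounded order. -/
theorem aux_bound (k : Type) [Field k] [Finite k] (c : Polynomial k) (hc : c ≠ 0) :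
    ∃ M : ℕ, 0 < M ∧ ∀ (F : Type) [Field F] (i : k →+* F) (z : F), z ≠ 0 →
      Polynomial.eval₂ i z c = 0 → orderOf z ≤ M := by
  have : Module.Finite k (AdjoinRoot c) := (AdjoinRoot.powerBasis hc).finite
  have : Finite (AdjoinRoot c) := Module.finite_of_finite k
  obtain ⟨m, n, hmn, he⟩ :=
    Finite.exists_ne_map_eq_of_infinite (fun n : ℕ => (AdjoinRoot.root c) ^ n)
  wlog hlt : m < n generalizing m n
  · exact this n m hmn.symm he.symm (by omega)
  refine ⟨n - m, by omega, ?_⟩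
  intro F _ i z hz h0
  have h1 := congrArg (AdjoinRoot.lift i z h0) he
  simp only [map_pow, AdjoinRoot.lift_root] at h1
  apply orderOf_le_of_pow_eq_one (by omega)
  have h2 : z ^ m * z ^ (n - m) = z ^ m * 1 := by
    rw [← pow_add, mul_one, h1]; congr 1; omega
  exact mul_left_cancel₀ (pow_ne_zero _ hz) h2

theorem aux_place (k K : Type) [Field k] [Finite k] [Field K] [Algebra k K]
    (hK : IsFunctionFieldOneVar k K) (l : ℕ) (hl : l.Prime) (hlk : (l : k) ≠ 0)
    (h x y : K) (hh : Transcendental k h) :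
    ∃ N : ℕ, ∀ n : ℕ, N ≤ n → ∃ O : ValuationSubring K,
      (∀ c : k, algebraMap k K c ∈ O) ∧ O ≠ ⊤ ∧ x ∈ O ∧ y ∈ O ∧
      ∃ hO : h ∈ O, orderOf (IsLocalRing.residue ↥O ⟨h, hO⟩) = l ^ n := by
  classical
  have halg := aux_alg k K hK h hh
  obtain ⟨d, hd0, hd⟩ := Algebra.IsAlgebraic.exists_integral_multiples
    (R := Algebra.adjoin k {h}) (A := K) {x, y}
  obtain ⟨c, hc⟩ : ∃ c : Polynomial k, Polynomial.aeval h c = (d : K) := by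
    exact (Algebra.adjoin_singleton_eq_range_aeval k h).le d.2
  have hc0 : c ≠ 0 := by
    rintro rfl
    apply hd0
    apply Subtype.ext
    rw [← hc]; simp
  obtain ⟨M, hM, hbd⟩ := aux_bound k c hc0
  refine ⟨M, fun n hn => ?_⟩
  have hn0 : 0 < n := by omega
  have hMn : M < l ^ n := lt_of_le_of_lt hn (Nat.lt_pow_self hl.one_lt)
  let φ := Polynomial.cyclotomic (l ^ n) k
  let A : Subring K := (Algebra.adjoin k {h}).toSubring
  have hmem : ∀ q : Polynomial k, Polynomial.aeval h q ∈ A := fun q =>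
    Polynomial.aeval_mem_adjoin_singleton k h
  have hI : Ideal.span {(⟨Polynomial.aeval h φ, hmem φ⟩ : A)} ≠ ⊤ := by
    rw [Ne, Ideal.span_singleton_eq_top]
    intro hu
    obtain ⟨⟨w, hw⟩, hw1⟩ := hu.exists_right_inv
    have hw' : w ∈ Algebra.adjoin k {h} := hw
    rw [Algebra.adjoin_singleton_eq_range_aeval] at hw'
    obtain ⟨q, hq⟩ := hw'
    have hw2 : Polynomial.aeval h φ * w = 1 := congrArg Subtype.val hw1
    have hq' : Polynomial.aeval h q = w := hq
    rw [← hq', ← map_mul, ← map_one (Polynomial.aeval (R := k) h)] at hw2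
    have := transcendental_iff_injective.mp hh hw2
    have h3 := Polynomial.natDegree_eq_zero_of_isUnit (IsUnit.of_mul_eq_one _ this)
    rw [Polynomial.natDegree_cyclotomic] at h3
    have := Nat.totient_pos.mpr (pow_pos hl.pos n)
    omega
  obtain ⟨O, hAO, hnon⟩ := Ideal.image_subset_nonunits_valuationSubring _ hI
  have hk : ∀ c : k, algebraMap k K c ∈ O := fun c => hAO ((Algebra.adjoin k {h}).algebraMap_mem c)
  have hO : h ∈ O := hAO (Algebra.self_mem_adjoin_singleton k h)
  have hφ : Polynomial.aeval h φ ∈ O.nonunits := hnon ⟨_, Ideal.subset_span rfl, rfl⟩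
  let e : k →+* O := (algebraMap k K).codRestrict O.toSubring hk
  have hev : ∀ q : Polynomial k, ((Polynomial.eval₂ e ⟨h, hO⟩ q : O) : K) =
      Polynomial.aeval h q := by
    intro q
    have := Polynomial.hom_eval₂ q e O.subtype ⟨h, hO⟩
    exact this
  let i : k →+* IsLocalRing.ResidueField O := (IsLocalRing.residue O).comp e
  set z := IsLocalRing.residue ↥O ⟨h, hO⟩ with hz
  have hev2 : ∀ q : Polynomial k, Polynomial.eval₂ i z q =
      IsLocalRing.residue O (Polynomial.eval₂ e ⟨h, hO⟩ q) := by
    intro q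
    exact (Polynomial.hom_eval₂ q e (IsLocalRing.residue O) ⟨h, hO⟩).symm
  have hzφ : Polynomial.eval₂ i z φ = 0 := by
    rw [hev2, IsLocalRing.residue_eq_zero_iff, ← ValuationSubring.coe_mem_nonunits_iff, hev]
    exact hφ
  have hprim : IsPrimitiveRoot z (l ^ n) := by
    have : NeZero ((l ^ n : ℕ) : IsLocalRing.ResidueField O) := ⟨by
      have : ((l ^ n : ℕ) : IsLocalRing.ResidueField O) = i (((l:k)) ^ n) := by simp
      rw [this, map_ne_zero]
      exact pow_ne_zero _ hlk⟩
    rw [← Polynomial.isRoot_cyclotomic_iff, Polynomial.IsRoot.def,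
      ← Polynomial.map_cyclotomic (l ^ n) i, Polynomial.eval_map]
    exact hzφ
  have hord : orderOf z = l ^ n := hprim.eq_orderOf.symm
  have hz0 : z ≠ 0 := hprim.ne_zero (pow_pos hl.pos n).ne'
  have hcz : Polynomial.eval₂ i z c ≠ 0 := by
    intro h0
    have := hbd _ i z hz0 h0
    omega
  have hdinv : (d : K)⁻¹ ∈ O := by
    rw [hev2, Ne, IsLocalRing.residue_eq_zero_iff, ← ValuationSubring.coe_mem_nonunits_iff, hev, hc,
      ValuationSubring.mem_nonunits_iff_or] at hcz
    push Not at hcz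
    exact hcz.2
  have hdK : (d : K) ≠ 0 := fun h0 => hd0 (Subtype.ext h0)
  have hint : ∀ w : K, IsIntegral (Algebra.adjoin k {h}) (d • w) → w ∈ O := by
    intro w hw
    have h1 : IsIntegral O (d • w) := by
      obtain ⟨P, hPm, hP0⟩ := hw
      let j : Algebra.adjoin k {h} →+* O := Subring.inclusion (S := A) (T := O.toSubring) hAO
      refine ⟨P.map j, hPm.map j, ?_⟩
      rw [Polynomial.eval₂_map]
      exact hP0
    obtain ⟨u, hu⟩ := IsIntegrallyClosed.isIntegral_iff.mp h1
    have h2 : (d : K) * w ∈ O := by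
      have : (d : K) * w = (u : K) := hu.symm
      rw [this]; exact u.2
    have := O.mul_mem _ _ hdinv h2
    rwa [inv_mul_cancel_left₀ hdK] at this
  refine ⟨O, hk, ?_, hint x (hd x (by simp)), hint y (hd y (by simp)), hO, hord⟩
  rintro rfl
  rw [ValuationSubring.mem_nonunits_iff_or] at hφ
  rcases hφ with h0 | h0
  · have : φ = 0 := (transcendental_iff_injective.mp hh) (by rw [h0, map_zero])
    exact Polynomial.cyclotomic_ne_zero _ _ this
  · exact h0 trivial

theorem aux_inf (k K : Type) [Field k] [Finite k] [Field K] [Algebra k K]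
    (hK : IsFunctionFieldOneVar k K) (l : ℕ) (hl : l.Prime) (hlk : (l : k) ≠ 0)
    (h x y : K) (hh : Transcendental k h) :
    {O : ValuationSubring K |
      (∀ c : k, algebraMap k K c ∈ O) ∧ O ≠ ⊤ ∧ x ∈ O ∧ y ∈ O ∧
      ∃ hO : h ∈ O, ∃ n, orderOf (IsLocalRing.residue ↥O ⟨h, hO⟩) = l ^ n}.Infinite := by
  obtain ⟨N, hN⟩ := aux_place k K hK l hl hlk h x y hh
  choose O h1 h2 h3 h4 h5 h6 using fun n : ℕ => hN (N + n) (by omega)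
  refine Set.infinite_of_injective_forall_mem (f := O) ?_
    fun n => ⟨h1 n, h2 n, h3 n, h4 n, h5 n, _, h6 n⟩
  intro a b hab
  have key : ∀ (P Q : ValuationSubring K) (hP : h ∈ P) (hQ : h ∈ Q), P = Q →
      orderOf (IsLocalRing.residue ↥P ⟨h, hP⟩) = orderOf (IsLocalRing.residue ↥Q ⟨h, hQ⟩) := by
    rintro P Q hP hQ rfl
    rfl
  have := key _ _ (h5 a) (h5 b) hab
  rw [h6, h6] at this
  have := Nat.pow_right_injective hl.two_le this
  omega

theorem aux_primary (S : Set ℕ) (l : ℕ) (hl : l.Prime) (hlS : l ∉ S) {F : Type} [Field F]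
    (z : F) (n : ℕ) (hz : orderOf z = l ^ n) : z ≠ 0 ∧ PrimaryOutside S z := by
  have hpos : 0 < orderOf z := hz ▸ pow_pos hl.pos n
  refine ⟨?_, orderOf_pos_iff.mp hpos, ?_⟩
  · rintro rfl
    simp at hpos
  · intro q hq hd
    rw [hz] at hd
    rwa [(Nat.prime_dvd_prime_iff_eq hq hl).mp (hq.dvd_of_dvd_pow hd)]

theorem aux_one (S : Set ℕ) {F : Type} [Field F] : PrimaryOutside S (1 : F) := by
  refine ⟨IsOfFinOrder.one, fun q hq hd => ?_⟩
  rw [orderOf_one] at hd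
  exact absurd (Nat.dvd_one.mp hd) hq.ne_one

/-- **Proposition 3.6.** Let `K` be a function field of one variable over a finite field
`k` of characteristic `p`, and `S` a set of primes with `S ∪ {p}` not all of the primes.
For any `f, g ∈ K ∖ k` there are infinitely many places `O` of `K` (valuation subrings
containing `k`, distinct from `K`) with `f, g ∈ O` such that `f(O) = a + b·g(O)` in the
residue field for some `a, b` in the residue field, nonzero of `S'`-primary order. -/
theorem prop_3_6
    (k K : Type) [Field k] [Finite k] [Field K] [Algebra k K]
    (p : ℕ) (hp : p.Prime) [CharP k p]
    (hK : IsFunctionFieldOneVar k K)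
    (S : Set ℕ) (hS : ∃ ℓ : ℕ, ℓ.Prime ∧ ℓ ∉ S ∧ ℓ ≠ p)
    (f g : K) (hf : f ∉ (algebraMap k K).range) (hg : g ∉ (algebraMap k K).range) :
    {O : ValuationSubring K |
      (∀ c : k, algebraMap k K c ∈ O) ∧ O ≠ ⊤ ∧
      ∃ (hfO : f ∈ O) (hgO : g ∈ O),
        ∃ a b : IsLocalRing.ResidueField ↥O,
          a ≠ 0 ∧ b ≠ 0 ∧ PrimaryOutside S a ∧ PrimaryOutside S b ∧
          IsLocalRing.residue ↥O ⟨f, hfO⟩ =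
            a + b * IsLocalRing.residue ↥O ⟨g, hgO⟩}.Infinite := by
  obtain ⟨l, hl, hlS, hlp⟩ := hS
  have hlk : (l : k) ≠ 0 := by
    rw [Ne, CharP.cast_eq_zero_iff k p]
    intro hd
    exact hlp ((Nat.prime_dvd_prime_iff_eq hp hl).mp hd).symm
  have htr : ∀ u : K, u ∉ (algebraMap k K).range → Transcendental k u :=
    fun u hu ha => hu (hK.2 u ha)
  by_cases hc1 : f - g ∈ (algebraMap k K).range
  swap
  · refine (aux_inf k K hK l hl hlk (f - g) f g (htr _ hc1)).mono ?_
    rintro O ⟨h1, h2, h3, h4, h5, n, h6⟩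
    obtain ⟨hz, hz'⟩ := aux_primary S l hl hlS _ n h6
    refine ⟨h1, h2, h3, h4, _, 1, hz, one_ne_zero, hz', aux_one S, ?_⟩
    rw [one_mul, ← map_add]
    congr 1
    exact Subtype.ext (sub_add_cancel f g).symm
  have hg0 : g ≠ 0 := by
    rintro rfl
    exact hg (zero_mem _)
  by_cases hc2 : (f - 1) / g ∈ (algebraMap k K).range
  swap
  · refine (aux_inf k K hK l hl hlk ((f - 1) / g) f g (htr _ hc2)).mono ?_
    rintro O ⟨h1, h2, h3, h4, h5, n, h6⟩
    obtain ⟨hz, hz'⟩ := aux_primary S l hl hlS _ n h6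
    refine ⟨h1, h2, h3, h4, 1, _, one_ne_zero, hz, aux_one S, hz', ?_⟩
    rw [← map_mul, ← map_one (IsLocalRing.residue O), ← map_add]
    congr 1
    apply Subtype.ext
    change f = 1 + (f - 1) / g * g
    field_simp
    ring
  have hfg : f = 1 + g := by
    obtain ⟨c, hc⟩ := hc1
    obtain ⟨d, hd⟩ := hc2
    rw [eq_div_iff hg0] at hd
    have e1 : algebraMap k K (d - 1) * g = algebraMap k K (c - 1) := by
      rw [map_sub, map_sub, map_one, hc, sub_mul, hd]; ring
    by_cases hd1 : d - 1 = 0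
    · rw [hd1, map_zero, zero_mul, map_sub, map_one, hc] at e1
      linear_combination -e1
    · exfalso
      apply hg
      refine ⟨(d - 1)⁻¹ * (c - 1), ?_⟩
      rw [map_mul, ← e1, ← mul_assoc, ← map_mul, inv_mul_cancel₀ hd1, map_one, one_mul]
  refine (aux_inf k K hK l hl hlk g f g (htr _ hg)).mono ?_
  rintro O ⟨h1, h2, h3, h4, -⟩
  refine ⟨h1, h2, h3, h4, 1, 1, one_ne_zero, one_ne_zero, aux_one S, aux_one S, ?_⟩
  rw [one_mul, ← map_one (IsLocalRing.residue O), ← map_add]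
  congr 1
  exact Subtype.ext hfg
end

section
/- (Core of Proposition 3.7 (i)) Let p be a prime number, k̄ an algebraic closure of 𝔽_p, and Σ a set of prime numbers. Let k' be an infinite subfield of k̄ such that the subgroup T := {x ∈ (k')^× : every prime dividing the multiplicative order of x lies in Σ} of (k')^× is finite, and set N' := #T. Then for all c, d ∈ (k')^×, there exist u, v ∈ (k')^× with c = u^{N'} + d·v^{N'}. In particular, there exist a, b ∈ (k')^× of Σ'-primary order with c = a + b·d. -/
/-- Incidence lemma: a large subset of a finite field solves `c y = g + d h x`. -/
lemma incidence {F : Type*} [Field F] [Fintype F] [DecidableEq F] (G : Finset F) (c d : F)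
    (hc : c ≠ 0) (hd : d ≠ 0) (hG : (Fintype.card F) ^ 3 < G.card ^ 4) :
    ∃ g ∈ G, ∃ h ∈ G, ∃ x ∈ G, ∃ y ∈ G, c * y = g + d * h * x := by
  by_contra hno
  push Not at hno
  set q := Fintype.card F with hq
  let P : Finset (F × F) := G ×ˢ G
  let e : F × F → F × F → ℕ := fun z l => if c * z.2 = l.1 + d * l.2 * z.1 then 1 else 0
  let i : F × F → ℕ := fun z => ∑ l ∈ P, e z l
  have hP : P.card = G.card ^ 2 := by simp [P, Finset.card_product, sq]
  -- one line has q points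
  have hline : ∀ l : F × F, ∑ z : F × F, e z l = q := by
    intro l
    rw [Fintype.sum_prod_type]
    have : ∀ x : F, ∑ y : F, e (x, y) l = 1 := by
      intro x
      rw [Finset.sum_eq_single ((l.1 + d * l.2 * x) / c)]
      · simp only [e]; rw [if_pos]; field_simp
      · intro y _ hy
        simp only [e]; rw [if_neg]
        intro h; apply hy; rw [← h]; field_simp
      · simp
    simp [this, hq]
  have hpair : ∀ l l' : F × F, ∑ z : F × F, e z l * e z l' ≤ (if l = l' then q else 0) + 1 := by
    intro l l'
    split_ifs with h
    · subst h
      calc ∑ z : F × F, e z l * e z l = ∑ z : F × F, e z l := by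
            apply Finset.sum_congr rfl; intro z _; simp only [e]; split_ifs <;> simp
        _ ≤ q + 1 := by rw [hline]; omega
    · have h1 : ∑ z : F × F, e z l * e z l' =
          (Finset.univ.filter fun z : F × F => c * z.2 = l.1 + d * l.2 * z.1 ∧
            c * z.2 = l'.1 + d * l'.2 * z.1).card := by
        rw [Finset.card_filter]
        apply Finset.sum_congr rfl; intro z _; simp only [e]
        rw [ite_and]
        split_ifs <;> rfl
      rw [h1, zero_add, Finset.card_le_one]
      rintro ⟨x, y⟩ hz ⟨x', y'⟩ hz'
      simp only [Finset.mem_filter, Finset.mem_univ, true_and] at hz hz'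
      obtain ⟨a1, a2⟩ := hz
      obtain ⟨b1, b2⟩ := hz'
      have hx : x = x' := by
        by_contra hne
        have e1 : (d * (l.2 - l'.2)) * (x - x') = 0 := by linear_combination a2 - a1 + b1 - b2
        have e2 : l.2 = l'.2 := by
          rcases mul_eq_zero.1 e1 with e | e
          · rcases mul_eq_zero.1 e with e | e
            · exact absurd e hd
            · exact sub_eq_zero.1 e
          · exact absurd (sub_eq_zero.1 e) hne
        apply h
        refine Prod.ext ?_ e2
        rw [e2] at a1
        linear_combination a2 - a1
      subst hx
      have : y = y' := mul_left_cancel₀ hc (a1.trans b1.symm)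
      rw [this]
  have hS1 : ∑ z : F × F, i z = G.card ^ 2 * q := by
    simp only [i]
    rw [Finset.sum_comm]
    simp [hline, hP]
  have hS2 : ∑ z : F × F, i z ^ 2 ≤ G.card ^ 2 * q + G.card ^ 4 := by
    have h1 : ∑ z : F × F, i z ^ 2 = ∑ l ∈ P, ∑ l' ∈ P, ∑ z : F × F, e z l * e z l' := by
      simp only [i, sq, Finset.sum_mul_sum]
      rw [Finset.sum_comm]
      apply Finset.sum_congr rfl; intro l _
      rw [Finset.sum_comm]
    rw [h1]
    calc _ ≤ ∑ l ∈ P, ∑ l' ∈ P, ((if l = l' then q else 0) + 1) :=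
          Finset.sum_le_sum fun l _ => Finset.sum_le_sum fun l' _ => hpair l l'
      _ = ∑ l ∈ P, (q + P.card) := by
          apply Finset.sum_congr rfl; intro l hl
          rw [Finset.sum_add_distrib, Finset.sum_ite_eq, if_pos hl]; simp
      _ = _ := by simp [hP]; ring
      _ ≤ _ := le_rfl
  have hzero : ∀ z ∈ P, i z = 0 := by
    rintro ⟨x, y⟩ hz
    simp only [i, e]
    apply Finset.sum_eq_zero
    rintro ⟨g, h⟩ hl
    simp only [P, Finset.mem_product] at hz hl
    rw [if_neg]
    exact hno g hl.1 h hl.2 x hz.1 y hz.2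
  have hA : ∑ z ∈ Pᶜ, i z = G.card ^ 2 * q := by
    rw [← hS1, ← Finset.sum_add_sum_compl P i, Finset.sum_eq_zero hzero, zero_add]
  have hB : ∑ z ∈ Pᶜ, i z ^ 2 ≤ G.card ^ 2 * q + G.card ^ 4 :=
    le_trans (Finset.sum_le_sum_of_subset (Finset.subset_univ _)) hS2
  have hcs := sq_sum_le_card_mul_sum_sq (s := Pᶜ) (f := i)
  have hcard : Pᶜ.card + G.card ^ 2 = q ^ 2 := by
    rw [← hP, add_comm, Finset.card_add_card_compl, Fintype.card_prod, sq]
  rw [hA] at hcs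
  have h3 := hcs.trans (Nat.mul_le_mul_left _ hB)
  generalize G.card = n at *
  generalize Pᶜ.card = m at *
  have hn : 0 < n := by
    rcases Nat.eq_zero_or_pos n with h | h
    · subst h; simp at hG
    · exact h
  have h4 : (n ^ 2 * q) ^ 2 + n ^ 2 * (n ^ 2 * q + n ^ 4) ≤ q ^ 2 * (n ^ 2 * q + n ^ 4) := by
    rw [← hcard, add_mul]; linarith
  have h5 : n ^ 2 * n ^ 4 ≤ n ^ 2 * q ^ 3 := by nlinarith [Nat.zero_le (n ^ 4 * q)]
  have := Nat.le_of_mul_le_mul_left h5 (by positivity)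
  omega

/-- The twisted Fermat equation over a large finite field. -/
lemma fermat {F : Type*} [Field F] [Finite F] (N : ℕ) (hN : 0 < N) (c d : F)
    (hc : c ≠ 0) (hd : d ≠ 0) (hq : 16 * N ^ 4 < Nat.card F) :
    ∃ u v : F, u ≠ 0 ∧ v ≠ 0 ∧ c = u ^ N + d * v ^ N := by
  classical
  haveI := Fintype.ofFinite F
  rw [Nat.card_eq_fintype_card] at hq
  let U : Finset F := Finset.univ.erase 0
  let G : Finset F := U.image (· ^ N)
  have hU : U.card + 1 = Fintype.card F := by
    rw [Finset.card_erase_add_one (Finset.mem_univ _), Finset.card_univ]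
  have hUG : U.card ≤ N * G.card := by
    apply Finset.card_le_mul_card_image
    intro b _
    calc _ ≤ (Polynomial.nthRoots N b).toFinset.card := by
          apply Finset.card_le_card
          intro x hx
          rw [Multiset.mem_toFinset, Polynomial.mem_nthRoots hN]
          exact (Finset.mem_filter.1 hx).2
      _ ≤ (Polynomial.nthRoots N b).card := Multiset.toFinset_card_le _
      _ ≤ N := Polynomial.card_nthRoots N b
  have hbig : (Fintype.card F) ^ 3 < G.card ^ 4 := by
    generalize G.card = n at *
    generalize Fintype.card F = q at *
    have hq2 : 0 < q := by omega
    have h1 : q ≤ 2 * (N * n) := by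
      have : 1 ≤ N ^ 4 := Nat.one_le_pow _ _ hN
      omega
    have h2 : q ^ 4 ≤ 16 * N ^ 4 * n ^ 4 := by
      calc q ^ 4 ≤ (2 * (N * n)) ^ 4 := Nat.pow_le_pow_left h1 4
        _ = _ := by ring
    by_contra hcon
    push Not at hcon
    have h3 : q ^ 4 ≤ 16 * N ^ 4 * q ^ 3 := h2.trans (Nat.mul_le_mul_left _ hcon)
    have h4 : 16 * N ^ 4 * q ^ 3 < q * q ^ 3 := Nat.mul_lt_mul_of_pos_right hq (by positivity)
    have : q ^ 4 = q * q ^ 3 := by ring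
    omega
  obtain ⟨g, hg, h, hh, x, hx, y, hy, heq⟩ := incidence G c d hc hd hbig
  have key : ∀ z ∈ G, ∃ w : F, w ≠ 0 ∧ w ^ N = z := by
    intro z hz
    obtain ⟨w, hw, rfl⟩ := Finset.mem_image.1 hz
    exact ⟨w, (Finset.mem_erase.1 hw).1, rfl⟩
  obtain ⟨g, hg0, rfl⟩ := key g hg
  obtain ⟨h, hh0, rfl⟩ := key h hh
  obtain ⟨x, hx0, rfl⟩ := key x hx
  obtain ⟨y, hy0, rfl⟩ := key y hy
  refine ⟨g / y, h * x / y, div_ne_zero hg0 hy0, div_ne_zero (mul_ne_zero hh0 hx0) hy0, ?_⟩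
  have : y ^ N ≠ 0 := pow_ne_zero _ hy0
  rw [div_pow, div_pow, mul_pow]
  field_simp
  linear_combination heq

/-- A finite set of elements of `k'` lies in a finite intermediate field inside `k'`. -/
lemma exists_finite_subfield (p : ℕ) [Fact p.Prime] (kbar : Type) [Field kbar]
    [Algebra (ZMod p) kbar] [Algebra.IsAlgebraic (ZMod p) kbar]
    (k' : Subfield kbar) (s : Finset kbar) (hs : ∀ x ∈ s, x ∈ k') :
    ∃ E : IntermediateField (ZMod p) kbar, Finite E ∧ (∀ x ∈ E, x ∈ k') ∧ ∀ x ∈ s, x ∈ E := by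
  let K : IntermediateField (ZMod p) kbar := k'.toIntermediateField (by
    intro x
    obtain ⟨n, rfl⟩ := ZMod.natCast_zmod_surjective x
    rw [map_natCast]
    exact natCast_mem k' n)
  refine ⟨IntermediateField.adjoin (ZMod p) (s : Set kbar), ?_, ?_, ?_⟩
  · haveI : FiniteDimensional (ZMod p) (IntermediateField.adjoin (ZMod p) (s : Set kbar)) :=
      IntermediateField.finiteDimensional_adjoin fun x _ => Algebra.IsIntegral.isIntegral x
    exact Module.finite_of_finite (ZMod p)
  · have : IntermediateField.adjoin (ZMod p) (s : Set kbar) ≤ K :=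
      IntermediateField.adjoin_le_iff.2 fun x hx => hs x hx
    intro x hx
    exact this hx
  · intro x hx
    exact IntermediateField.subset_adjoin _ _ hx

/-- **Core of Proposition 3.7 (i).** Let `k̄` be an algebraic closure of `𝔽_p`, `k'` an
infinite subfield of `k̄` such that the subgroup `T` of `(k')^×` of elements whose
multiplicative order has all prime divisors in `S` is finite, of cardinality `N'`. Then
every `c ∈ (k')^×` can be written `c = u^{N'} + d·v^{N'}` with `u, v ∈ (k')^×`, for any
`d ∈ (k')^×`; in particular `c = a + b·d` with `a, b ∈ (k')^×` of `S'`-primary order. -/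
theorem prop_3_7_i
    (p : ℕ) [Fact p.Prime] (kbar : Type) [Field kbar]
    [Algebra (ZMod p) kbar] [IsAlgClosure (ZMod p) kbar]
    (k' : Subfield kbar) (hk' : Infinite ↥k') (S : Set ℕ)
    (hT : {x : kbar | x ∈ k' ∧ x ≠ 0 ∧ ∀ ℓ : ℕ, ℓ.Prime → ℓ ∣ orderOf x → ℓ ∈ S}.Finite) :
    ∀ c d : kbar, c ∈ k' → d ∈ k' → c ≠ 0 → d ≠ 0 →
      (∃ u v : kbar, u ∈ k' ∧ v ∈ k' ∧ u ≠ 0 ∧ v ≠ 0 ∧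
        c = u ^ hT.toFinset.card + d * v ^ hT.toFinset.card) ∧
      (∃ a b : kbar, a ∈ k' ∧ b ∈ k' ∧ a ≠ 0 ∧ b ≠ 0 ∧
        PrimaryOutside S a ∧ PrimaryOutside S b ∧ c = a + b * d) := by
  classical
  intro c d hc hd hc0 hd0
  haveI : Algebra.IsAlgebraic (ZMod p) kbar := IsAlgClosure.isAlgebraic
  set N := hT.toFinset.card with hN
  have hNpos : 0 < N := by
    apply Finset.card_pos.2
    refine ⟨1, ?_⟩
    rw [Set.Finite.mem_toFinset]
    refine ⟨one_mem _, one_ne_zero, ?_⟩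
    intro ℓ hl h
    rw [orderOf_one] at h
    exact absurd (Nat.dvd_one.1 h) hl.ne_one
  have first : ∃ u v : kbar, u ∈ k' ∧ v ∈ k' ∧ u ≠ 0 ∧ v ≠ 0 ∧ c = u ^ N + d * v ^ N := by
    obtain ⟨t, ht⟩ := Infinite.exists_subset_card_eq k' (16 * N ^ 4 + 1)
    obtain ⟨E, hfin, hEk, hsE⟩ := exists_finite_subfield p kbar k'
      (insert c (insert d (t.image (fun x : k' => (x : kbar))))) (by
        intro x hx
        simp only [Finset.mem_insert, Finset.mem_image] at hx
        rcases hx with rfl | rfl | ⟨y, _, rfl⟩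
        · exact hc
        · exact hd
        · exact y.2)
    have hcE : c ∈ E := hsE c (by simp)
    have hdE : d ∈ E := hsE d (by simp)
    have hcard : 16 * N ^ 4 < Nat.card E := by
      have h1 : (t.image (fun x : k' => (x : kbar))).card = 16 * N ^ 4 + 1 := by
        rw [Finset.card_image_of_injective _ Subtype.val_injective, ht]
      have h2 : ((t.image (fun x : k' => (x : kbar)) : Finset kbar) : Set kbar) ⊆ (E : Set kbar) := by
        intro x hx
        exact hsE x (Finset.mem_insert_of_mem (Finset.mem_insert_of_mem hx))
      have h3 := Set.ncard_le_ncard h2 (Set.toFinite (E : Set kbar))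
      rw [Set.ncard_coe_finset, h1] at h3
      have h4 : (E : Set kbar).ncard = Nat.card E := rfl
      omega
    obtain ⟨u, v, hu, hv, h⟩ := fermat (F := E) N hNpos ⟨c, hcE⟩ ⟨d, hdE⟩
      (fun h => hc0 (congrArg Subtype.val h)) (fun h => hd0 (congrArg Subtype.val h)) hcard
    refine ⟨u, v, hEk _ u.2, hEk _ v.2, ?_, ?_, ?_⟩
    · intro h; exact hu (Subtype.ext h)
    · intro h; exact hv (Subtype.ext h)
    · exact congrArg Subtype.val h
  -- torsion
  have tors : ∀ x : kbar, x ∈ k' → x ≠ 0 → IsOfFinOrder x := by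
    intro x hx hx0
    obtain ⟨E, hfin, -, hsE⟩ := exists_finite_subfield p kbar k' {x} (by simpa using hx)
    have hxE : x ∈ E := hsE x (by simp)
    have h1 : IsOfFinOrder (Units.mk0 (⟨x, hxE⟩ : E) (fun h => hx0 (congrArg Subtype.val h))) :=
      isOfFinOrder_of_finite _
    rw [isOfFinOrder_iff_pow_eq_one] at h1 ⊢
    obtain ⟨n, hn, h⟩ := h1
    refine ⟨n, hn, ?_⟩
    have := congrArg (fun z : Eˣ => ((z : E) : kbar)) h
    simpa using this
  let T : Subgroup kbarˣ :=
    { carrier := {x | (x : kbar) ∈ k' ∧ ∀ ℓ : ℕ, ℓ.Prime → ℓ ∣ orderOf x → ℓ ∈ S}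
      mul_mem' := by
        rintro a b ⟨ha, ha'⟩ ⟨hb, hb'⟩
        refine ⟨by simpa using mul_mem ha hb, ?_⟩
        intro ℓ hl h
        have h1 := (h.trans (Commute.all a b).orderOf_mul_dvd_lcm).trans (Nat.lcm_dvd_mul _ _)
        rcases hl.dvd_mul.1 h1 with h | h
        · exact ha' ℓ hl h
        · exact hb' ℓ hl h
      one_mem' := by
        refine ⟨by simp, ?_⟩
        intro ℓ hl h
        rw [orderOf_one] at h
        exact absurd (Nat.dvd_one.1 h) hl.ne_one
      inv_mem' := by
        rintro a ⟨ha, ha'⟩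
        refine ⟨by simpa using ha, ?_⟩
        rw [orderOf_inv]
        exact ha' }
  have hTcard : Nat.card T = N := by
    rw [hN, ← Set.ncard_eq_toFinset_card _ hT, ← Nat.card_coe_set_eq]
    refine Nat.card_congr (Equiv.ofBijective
      (fun x : T => ⟨((x : kbarˣ) : kbar), x.2.1, (x : kbarˣ).ne_zero, ?_⟩) ⟨?_, ?_⟩)
    · intro ℓ hl h
      rw [orderOf_units] at h
      exact x.2.2 ℓ hl h
    · intro x y h
      exact Subtype.ext (Units.ext (congrArg Subtype.val h))
    · rintro ⟨x, hx, hx0, hx'⟩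
      refine ⟨⟨Units.mk0 x hx0, hx, ?_⟩, rfl⟩
      intro ℓ hl h
      rw [← orderOf_units] at h
      exact hx' ℓ hl h
  have prim : ∀ u : kbar, u ∈ k' → u ≠ 0 → PrimaryOutside S (u ^ N) := by
    intro u hu hu0
    have hfin := tors u hu hu0
    refine ⟨hfin.pow, ?_⟩
    intro ℓ hl hdvd hS
    obtain ⟨a, m, hm, hn⟩ := Nat.exists_eq_pow_mul_and_not_dvd hfin.orderOf_pos.ne' ℓ hl.ne_one
    have hm0 : m ≠ 0 := by rintro rfl; exact hm (dvd_zero _)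
    let w : kbarˣ := Units.mk0 u hu0
    have hw : orderOf w = ℓ ^ a * m := by rw [← hn, ← orderOf_units]; rfl
    have hwm : orderOf (w ^ m) = ℓ ^ a := by
      rw [orderOf_pow_of_dvd hm0 (by rw [hw]; exact dvd_mul_left _ _), hw,
        Nat.mul_div_cancel _ (Nat.pos_of_ne_zero hm0)]
    have hwT : w ^ m ∈ T := by
      refine ⟨by simpa [w] using pow_mem hu m, ?_⟩
      intro r hr h
      rw [hwm] at h
      rw [(Nat.prime_dvd_prime_iff_eq hr hl).1 (hr.dvd_of_dvd_pow h)]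
      exact hS
    have hdN : ℓ ^ a ∣ N := by
      rw [← hwm, ← hTcard]
      exact Subgroup.orderOf_dvd_natCard T hwT
    have h1 : (u ^ N) ^ m = 1 := by
      rw [← pow_mul, ← orderOf_dvd_iff_pow_eq_one, hn]
      exact Nat.mul_dvd_mul_right hdN m
    exact hm (hdvd.trans (orderOf_dvd_of_pow_eq_one h1))
  refine ⟨first, ?_⟩
  obtain ⟨u, v, hu, hv, hu0, hv0, h⟩ := first
  exact ⟨u ^ N, v ^ N, pow_mem hu N, pow_mem hv N, pow_ne_zero _ hu0, pow_ne_zero _ hv0,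
    prim u hu hu0, prim v hv hv0, by rw [h]; ring⟩
end

section
/- (Point-counting claim in the proof of Proposition 3.7 (ii)) Let F be a finite field with q elements and let N be a positive integer dividing q − 1. If q ≥ 4 and q > N⁴, then for all c, d ∈ F^× there exist u, v ∈ F^× with c = u^N + d·v^N. -/
lemma norm_jacobiSum_le_sqrt (F : Type) [Field F] [Fintype F] (χ φ : MulChar F ℂ)
    (h : χ ≠ 1 ∨ φ ≠ 1) : ‖jacobiSum χ φ‖ ≤ √(Fintype.card F : ℝ) := by
  have hone : (1 : ℝ) ≤ √(Fintype.card F : ℝ) := by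
    rw [Real.one_le_sqrt]
    exact_mod_cast Fintype.card_pos
  by_cases h1 : χ = 1
  · subst h1
    have h2 : φ ≠ 1 := by simpa using h
    rw [jacobiSum_one_nontrivial h2]
    simpa using hone
  by_cases h2 : φ = 1
  · subst h2
    rw [jacobiSum_comm, jacobiSum_one_nontrivial h1]
    simpa using hone
  by_cases h3 : χ * φ = 1
  · have : φ = χ⁻¹ := (inv_eq_of_mul_eq_one_right h3).symm
    subst this
    rw [jacobiSum_nontrivial_inv h1, norm_neg]
    have hu : ‖χ (-1)‖ = 1 := by
      have : χ (-1) ^ 2 = 1 := by rw [← map_pow]; simp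
      exact Complex.norm_eq_one_of_pow_eq_one this two_ne_zero
    rw [hu]; exact hone
  · have hc : ringChar ℂ ≠ ringChar F := by
      rw [ringChar.eq_zero]
      exact (CharP.ringChar_ne_zero_of_finite F).symm
    have key := jacobiSum_mul_jacobiSum_inv hc h1 h2 h3
    have hstar : jacobiSum χ⁻¹ φ⁻¹ = star (jacobiSum χ φ) := by
      simp only [jacobiSum, star_sum, star_mul', MulChar.star_apply']
    rw [hstar] at key
    have := congrArg norm key
    rw [norm_mul, norm_star, Complex.norm_natCast] at this
    apply le_of_eq
    rw [← this, Real.sqrt_mul_self (norm_nonneg _)]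

lemma exists_pow_of_charsum_ne_zero (F : Type) [Field F] [Fintype F] (N : ℕ) (hN : 0 < N)
    (χ : MulChar F ℂ) (hχ : orderOf χ = N) (x : F)
    (hs : ∑ i ∈ Finset.range N, (χ ^ i) x ≠ 0) : ∃ u : F, u ≠ 0 ∧ u ^ N = x := by
  have hx : x ≠ 0 := by
    rintro rfl
    exact hs (Finset.sum_eq_zero fun i _ => MulChar.map_zero _)
  obtain ⟨y, rfl⟩ : ∃ y : Fˣ, (y : F) = x := ⟨Units.mk0 x hx, rfl⟩
  have hpow : χ ^ N = 1 := hχ ▸ pow_orderOf_eq_one χ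
  have h1 : χ y = 1 := by
    by_contra hne
    apply hs
    have hg := mul_geom_sum (χ (y : F)) N
    rw [← MulChar.pow_apply_coe, hpow, MulChar.one_apply_coe, sub_self] at hg
    simp only [MulChar.pow_apply_coe]
    exact (mul_eq_zero.mp hg).resolve_left (sub_ne_zero.mpr hne)
  obtain ⟨g, hg⟩ := IsCyclic.exists_generator (α := Fˣ)
  obtain ⟨k, hk⟩ := (mem_powers_iff_mem_zpowers).mpr (hg y)
  simp only at hk
  have hd : N ∣ k := by
    rw [← hχ, orderOf_dvd_iff_pow_eq_one, MulChar.eq_iff hg, MulChar.pow_apply_coe,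
      MulChar.one_apply_coe, ← map_pow, ← Units.val_pow_eq_pow_val, hk, h1]
  obtain ⟨m, rfl⟩ := hd
  refine ⟨((g ^ m : Fˣ) : F), Units.ne_zero _, ?_⟩
  rw [← hk, ← Units.val_pow_eq_pow_val, ← pow_mul, mul_comm]

/-- **Point-counting claim in the proof of Proposition 3.7 (ii).** Let `F` be a finite
field with `q` elements and `N` a positive divisor of `q - 1`. If `q ≥ 4` and `q > N⁴`,
then every `c ∈ F^×` can be written as `c = u^N + d·v^N` with `u, v ∈ F^×`, for any
`d ∈ F^×`. -/
theorem fermat_curve_points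
    (F : Type) [Field F] [Fintype F] (N : ℕ) (hN : 0 < N)
    (hdvd : N ∣ Fintype.card F - 1) (h4 : 4 ≤ Fintype.card F)
    (hq : N ^ 4 < Fintype.card F) :
    ∀ c d : F, c ≠ 0 → d ≠ 0 →
      ∃ u v : F, u ≠ 0 ∧ v ≠ 0 ∧ c = u ^ N + d * v ^ N := by
  intro c d hc hd
  obtain ⟨χ, hχ⟩ := MulChar.exists_mulChar_orderOf F hdvd
    (Complex.isPrimitiveRoot_exp N hN.ne')
  set e : F := c / d with he
  have he0 : e ≠ 0 := div_ne_zero hc hd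
  set q : ℝ := (Fintype.card F : ℝ) with hqdef
  -- the character sum
  have hT : ∑ x : F, (∑ i ∈ Finset.range N, (χ ^ i) (c * x)) *
      (∑ j ∈ Finset.range N, (χ ^ j) (e * (1 - x))) =
      ∑ p ∈ Finset.range N ×ˢ Finset.range N,
        (χ ^ p.1) c * (χ ^ p.2) e * jacobiSum (χ ^ p.1) (χ ^ p.2) := by
    simp_rw [Finset.sum_mul_sum, ← Finset.sum_product']
    rw [Finset.sum_product_right]
    refine Finset.sum_congr rfl fun p _ => ?_
    rw [jacobiSum, Finset.mul_sum]
    refine Finset.sum_congr rfl fun x _ => ?_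
    rw [map_mul, map_mul]
    ring
  have hnorm : ∀ (ψ : MulChar F ℂ) (a : F), a ≠ 0 → ‖ψ a‖ = 1 := by
    intro ψ a ha
    have : ψ a ^ (Fintype.card F - 1) = 1 := by
      rw [← map_pow, FiniteField.pow_card_sub_one_eq_one a ha, map_one]
    exact Complex.norm_eq_one_of_pow_eq_one this (by omega)
  have hmem : ((0, 0) : ℕ × ℕ) ∈ Finset.range N ×ˢ Finset.range N := by simp [hN]
  have hrest : ‖∑ p ∈ (Finset.range N ×ˢ Finset.range N).erase (0, 0),
        (χ ^ p.1) c * (χ ^ p.2) e * jacobiSum (χ ^ p.1) (χ ^ p.2)‖ ≤ ((N : ℝ) ^ 2 - 1) * √q := by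
    refine (norm_sum_le_of_le _ (f := _) (n := fun _ => √q) ?_).trans (le_of_eq ?_)
    · rintro ⟨i, j⟩ hp
      simp only [Finset.mem_erase, Finset.mem_product, Finset.mem_range, ne_eq, Prod.mk.injEq,
        not_and_or] at hp
      rw [norm_mul, norm_mul, hnorm _ _ hc, hnorm _ _ he0, one_mul, one_mul]
      refine norm_jacobiSum_le_sqrt F _ _ ?_
      rcases hp with ⟨h | h, hi, hj⟩
      · exact Or.inl (pow_ne_one_of_lt_orderOf h (hχ ▸ hi))
      · exact Or.inr (pow_ne_one_of_lt_orderOf h (hχ ▸ hj))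
    · rw [Finset.sum_const, Finset.card_erase_of_mem hmem, Finset.card_product,
        Finset.card_range, nsmul_eq_mul, Nat.cast_sub (Nat.mul_pos hN hN)]
      push_cast
      ring
  have hne : ∑ p ∈ Finset.range N ×ˢ Finset.range N,
        (χ ^ p.1) c * (χ ^ p.2) e * jacobiSum (χ ^ p.1) (χ ^ p.2) ≠ 0 := by
    intro h0
    rw [← Finset.add_sum_erase _ _ hmem] at h0
    simp only [pow_zero] at h0
    rw [jacobiSum_one_one, MulChar.one_apply hc.isUnit, MulChar.one_apply he0.isUnit, one_mul,
      one_mul, add_comm, ← eq_neg_iff_add_eq_zero] at h0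
    rw [h0, norm_neg] at hrest
    have h2 : ‖((Fintype.card F : ℂ) - 2)‖ = q - 2 := by
      have : ((Fintype.card F : ℂ) - 2) = ((q - 2 : ℝ) : ℂ) := by simp [hqdef]
      rw [this, Complex.norm_real, Real.norm_eq_abs, abs_of_nonneg]
      have : (4 : ℝ) ≤ q := by rw [hqdef]; exact_mod_cast h4
      linarith
    rw [h2] at hrest
    have hq4 : (4 : ℝ) ≤ q := by rw [hqdef]; exact_mod_cast h4
    have hqN : (N : ℝ) ^ 4 < q := by rw [hqdef]; exact_mod_cast hq
    have hs : √q * √q = q := Real.mul_self_sqrt (by linarith)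
    have hs2 : 2 ≤ √q := Real.le_sqrt_of_sq_le (by linarith)
    have hsN : (N : ℝ) ^ 2 < √q := Real.lt_sqrt_of_sq_lt (by nlinarith)
    nlinarith
  rw [← hT] at hne
  obtain ⟨x, -, hx⟩ := Finset.exists_ne_zero_of_sum_ne_zero hne
  obtain ⟨u, hu, hu'⟩ := exists_pow_of_charsum_ne_zero F N hN χ hχ _ (left_ne_zero_of_mul hx)
  obtain ⟨v, hv, hv'⟩ := exists_pow_of_charsum_ne_zero F N hN χ hχ _ (right_ne_zero_of_mul hx)
  refine ⟨u, v, hu, hv, ?_⟩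
  rw [hu', hv', he]
  field_simp
  ring
end

section
/- (Lemma 3.8) Let p be a prime number and Σ a finite set of prime numbers. For a positive integer n, let n_Σ denote the greatest divisor of n all of whose prime divisors belong to Σ. Then there exists a constant C > 0, depending only on p and Σ, such that for every integer m ≥ 1 one has (p^m − 1)_Σ ≤ C·m. -/
theorem aux_val (p : ℕ) (hp : p.Prime) (l : ℕ) (hl : l.Prime) :
    ∃ c : ℕ, ∀ m : ℕ, 1 ≤ m →
      (p ^ m - 1).factorization l ≤ c + m.factorization l := by
  have : Fact l.Prime := ⟨hl⟩
  by_cases hlp : l = p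
  · refine ⟨0, fun m hm => ?_⟩
    rw [Nat.factorization_eq_zero_of_not_dvd]
    · omega
    · intro h
      have h1 : l ∣ p ^ m := hlp ▸ dvd_pow_self l (by omega)
      have h2 : 1 ≤ p ^ m := Nat.one_le_pow _ _ hp.pos
      have h3 := (Nat.dvd_sub_iff_right h2 h1).1 h
      exact hl.one_lt.ne' (Nat.dvd_one.1 h3)
  have hnd : ¬ l ∣ p := fun h => hlp ((Nat.prime_dvd_prime_iff_eq hl hp).1 h)
  rcases hl.eq_two_or_odd' with h2 | hodd
  · subst h2
    refine ⟨padicValNat 2 (p + 1) + padicValNat 2 (p - 1) + 1, fun m hm => ?_⟩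
    have hdiv : p ^ m - 1 ∣ p ^ (2 * m) - 1 := Nat.pow_sub_one_dvd_pow_sub_one p (Dvd.intro_left _ rfl)
    have hne : p ^ (2 * m) - 1 ≠ 0 := by
      have := Nat.one_lt_pow (n := 2 * m) (by omega) hp.one_lt
      omega
    have h := (Nat.factorization_le_iff_dvd (ne_zero_of_dvd_ne_zero hne hdiv) hne).2 hdiv 2
    have h' := padicValNat.pow_two_sub_one hp.one_lt hnd (n := 2 * m) (by omega) (by simp)
    have h3 : padicValNat 2 (2 * m) = 1 + padicValNat 2 m := by
      rw [padicValNat.mul (by norm_num) (by omega), padicValNat.self (by norm_num)]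
    simp only [Nat.factorization_def _ hl] at h ⊢
    omega
  · refine ⟨padicValNat l (p ^ (l - 1) - 1), fun m hm => ?_⟩
    have hl1 := hl.one_lt
    have hx1 : 1 < p ^ (l - 1) := Nat.one_lt_pow (by omega) hp.one_lt
    have hdiv : p ^ m - 1 ∣ (p ^ (l - 1)) ^ m - 1 := by
      rw [← pow_mul]
      exact Nat.pow_sub_one_dvd_pow_sub_one p (Dvd.intro_left _ rfl)
    have hne : (p ^ (l - 1)) ^ m - 1 ≠ 0 := by
      have := Nat.one_lt_pow (n := m) (by omega) hx1
      omega
    have h := (Nat.factorization_le_iff_dvd (ne_zero_of_dvd_ne_zero hne hdiv) hne).2 hdiv l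
    have hf : l ∣ p ^ (l - 1) - 1 := by
      have := Nat.ModEq.pow_totient ((Nat.coprime_primes hp hl).2 (Ne.symm hlp))
      rw [Nat.totient_prime hl] at this
      exact (Nat.modEq_iff_dvd' hx1.le).1 this.symm
    have h' := padicValNat.pow_sub_pow (p := l) (x := p ^ (l - 1)) (y := 1) hodd hx1 hf
      (fun h => hnd (hl.dvd_of_dvd_pow h)) (n := m) (by omega)
    rw [one_pow] at h'
    simp only [Nat.factorization_def _ hl] at h ⊢
    omega

/-- **Lemma 3.8.** Let `p` be a prime and `S` a finite set of primes. There exists a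
constant `C > 0`, depending only on `p` and `S`, such that for every `m ≥ 1` the greatest
divisor of `p ^ m - 1` all of whose prime divisors belong to `S`, namely
`∏_{ℓ ∈ S} ℓ ^ v_ℓ(p ^ m - 1)`, is at most `C · m`. -/
theorem lemma_3_8 (p : ℕ) (hp : p.Prime) (S : Finset ℕ) (hS : ∀ ℓ ∈ S, Nat.Prime ℓ) :
    ∃ C : ℕ, 0 < C ∧ ∀ m : ℕ, 1 ≤ m →
      (∏ ℓ ∈ S, ℓ ^ ((p ^ m - 1).factorization ℓ)) ≤ C * m := by
  choose! c hc using fun l (hl : l ∈ S) => aux_val p hp l (hS l hl)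
  refine ⟨∏ l ∈ S, l ^ c l, Finset.prod_pos fun l hl => pow_pos (hS l hl).pos _, fun m hm => ?_⟩
  have hd : ∏ l ∈ S, l ^ m.factorization l ∣ m := by
    apply Finset.prod_dvd_of_isRelPrime
    · intro a ha b hb hab
      exact Nat.coprime_iff_isRelPrime.1
        (Nat.Coprime.pow _ _ ((Nat.coprime_primes (hS a ha) (hS b hb)).2 hab))
    · intro l _
      exact Nat.ordProj_dvd m l
  calc ∏ l ∈ S, l ^ ((p ^ m - 1).factorization l)
      ≤ ∏ l ∈ S, (l ^ c l * l ^ m.factorization l) := by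
        apply Finset.prod_le_prod'
        intro l hl
        rw [← pow_add]
        exact Nat.pow_le_pow_right (hS l hl).pos (hc l hl m hm)
    _ = (∏ l ∈ S, l ^ c l) * ∏ l ∈ S, l ^ m.factorization l := Finset.prod_mul_distrib
    _ ≤ _ := Nat.mul_le_mul_left _ (Nat.le_of_dvd (by omega) hd)
end

section
/- (Proposition 3.11, combined with the descent of Definition/Proposition 3.5) Let k be a finite field of cardinality q and characteristic p, let K be a function field of one variable over k, and let Σ be a k-large set of prime numbers. Let f, g ∈ K ∖ k. Assume that for all but finitely many places O of K with f ∈ O and g ∈ O, there exist nonzero elements a, b of an algebraic closure of the residue field κ(O), both of Σ'-primary order, such that f(O) = a + b·g(O) holds in that algebraic closure. Then there exist a, b ∈ k^× of Σ'-primary order such that f = a + b·g in K. -/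
section Helpers

open Polynomial Function

/-- Elements of order prime to `S` are fixed by a suitable power of Frobenius. -/
lemma aux_exists_exponent (q p l N : ℕ) (T : Set ℕ) (hl : l.Prime) (hN : 1 ≤ N)
    (hT : ∀ r ∈ T, r.Prime → r ≠ p → ∀ j : ℕ, 1 ≤ j → ¬ l ^ N ∣ orderOf ((q : ZMod (r ^ j))))
    (hq : 1 ≤ q) (n : ℕ) :
    n ≠ 0 → (∀ r : ℕ, r.Prime → r ∣ n → r ∈ T ∧ r ≠ p) →
      ∃ m : ℕ, m ≠ 0 ∧ ¬ l ^ N ∣ m ∧ n ∣ q ^ m - 1 := by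
  induction n using Nat.recOnPosPrimePosCoprime with
  | prime_pow r j hr hj =>
    intro _ h
    obtain ⟨h1, h2⟩ := h r hr (dvd_pow_self r hj.ne')
    have h3 := hT r h1 hr h2 j hj
    refine ⟨_, ?_, h3, ?_⟩
    · intro h0; rw [h0] at h3; exact h3 (dvd_zero _)
    · have := pow_orderOf_eq_one (q : ZMod (r ^ j))
      rw [← ZMod.natCast_eq_zero_iff, Nat.cast_sub (Nat.one_le_pow _ _ hq)]
      push_cast
      rw [this, sub_self]
  | zero => intro h; exact absurd rfl h
  | one =>
    intro _ _
    refine ⟨1, one_ne_zero, ?_, one_dvd _⟩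
    intro h
    have := Nat.dvd_one.mp h
    have := Nat.one_lt_pow (by omega : N ≠ 0) hl.one_lt
    omega
  | coprime a b ha hb hab iha ihb =>
    intro _ h
    obtain ⟨m1, h10, h11, h12⟩ := iha (by omega) (fun r hr hd => h r hr (hd.mul_right _))
    obtain ⟨m2, h20, h21, h22⟩ := ihb (by omega) (fun r hr hd => h r hr (hd.mul_left _))
    refine ⟨Nat.lcm m1 m2, Nat.lcm_ne_zero h10 h20, ?_, ?_⟩
    · intro hd
      have h0 := Nat.lcm_ne_zero h10 h20
      rw [hl.pow_dvd_iff_le_factorization h0, Nat.factorization_lcm h10 h20] at hd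
      rw [hl.pow_dvd_iff_le_factorization h10] at h11
      rw [hl.pow_dvd_iff_le_factorization h20] at h21
      simp at hd
      omega
    · refine hab.mul_dvd_of_dvd_of_dvd (h12.trans ?_) (h22.trans ?_)
      · exact Nat.pow_sub_one_dvd_pow_sub_one q (Nat.dvd_lcm_left _ _)
      · exact Nat.pow_sub_one_dvd_pow_sub_one q (Nat.dvd_lcm_right _ _)

lemma aux_not_dvd_lcm (l N m1 m2 : ℕ) (hl : l.Prime) (h10 : m1 ≠ 0) (h20 : m2 ≠ 0)
    (h11 : ¬ l ^ N ∣ m1) (h21 : ¬ l ^ N ∣ m2) : ¬ l ^ N ∣ Nat.lcm m1 m2 := by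
  intro hd
  have h0 := Nat.lcm_ne_zero h10 h20
  rw [hl.pow_dvd_iff_le_factorization h0, Nat.factorization_lcm h10 h20] at hd
  rw [hl.pow_dvd_iff_le_factorization h10] at h11
  rw [hl.pow_dvd_iff_le_factorization h20] at h21
  simp at hd
  omega

/-- An element of order prime to `S` is a periodic point of Frobenius. -/
lemma aux_primary_s14 {k Ω : Type*} [Field k] [Fintype k] [Field Ω] [Algebra k Ω]
    (p : ℕ) (hp : p.Prime) [CharP k p] (l N : ℕ) (S : Set ℕ) (hl : l.Prime) (hN : 1 ≤ N)
    (hT : ∀ r ∈ {r : ℕ | r.Prime ∧ r ∉ S}, r.Prime → r ≠ p → ∀ j : ℕ, 1 ≤ j →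
      ¬ l ^ N ∣ orderOf ((Fintype.card k : ZMod (r ^ j))))
    (a : Ω) (ha : PrimaryOutside S a) :
    ∃ m : ℕ, m ≠ 0 ∧ ¬ l ^ N ∣ m ∧ IsPeriodicPt (FiniteField.frobeniusAlgHom k Ω) m a := by
  have : CharP Ω p := charP_of_injective_algebraMap' k p
  have : Fact p.Prime := ⟨hp⟩
  obtain ⟨m, hm0, hm1, hm2⟩ := aux_exists_exponent (Fintype.card k) p l N _ hl hN hT
    Fintype.card_pos (orderOf a) ha.1.orderOf_pos.ne' (by
      intro r hr hd
      refine ⟨⟨hr, ha.2 r hr hd⟩, ?_⟩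
      rintro rfl
      obtain ⟨c, hc⟩ := hd
      have h1 : (a ^ c) ^ r = 1 := by rw [← pow_mul, mul_comm, ← hc, pow_orderOf_eq_one]
      have h2 : a ^ c = 1 := by
        have : (a ^ c - 1) ^ r = 0 := by rw [sub_pow_char, h1, one_pow, sub_self]
        exact sub_eq_zero.mp (pow_eq_zero_iff hr.ne_zero |>.mp this)
      have h3 := orderOf_dvd_of_pow_eq_one h2
      have h4 : c ≠ 0 := by
        rintro rfl
        have := ha.1.orderOf_pos
        omega
      have h5 := Nat.le_of_dvd (Nat.pos_of_ne_zero h4) h3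
      have h6 := hr.two_le
      have : 2 * c ≤ r * c := Nat.mul_le_mul_right _ h6
      omega)
  refine ⟨m, hm0, hm1, ?_⟩
  rw [IsPeriodicPt, IsFixedPt, FiniteField.coe_frobeniusAlgHom, pow_iterate]
  have h1 := orderOf_dvd_iff_pow_eq_one.mp hm2
  have h2 : 1 ≤ Fintype.card k ^ m := Nat.one_le_pow _ _ Fintype.card_pos
  calc a ^ (Fintype.card k ^ m) = a ^ (Fintype.card k ^ m - 1) * a := by
        rw [← pow_succ]; congr 1; omega
    _ = a := by rw [h1, one_mul]

/-- Frobenius periodicity of `a` and `b` in `φ = a + b γ`. -/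
lemma aux_core {Ω : Type*} [Field Ω] (F : Ω →+* Ω) (γ φ a b : Ω) (h : φ = a + b * γ)
    (l N n e m : ℕ) (hl : l.Prime) (hγ : ∀ j, IsPeriodicPt F j γ ↔ l ^ n ∣ j) (hn : N ≤ n)
    (hm : ¬ l ^ N ∣ m) (ha : IsPeriodicPt F m a) (hb : IsPeriodicPt F m b)
    (hφ : IsPeriodicPt F (l ^ n * e) φ) :
    IsPeriodicPt F (l ^ N * e) a ∧ IsPeriodicPt F (l ^ N * e) b := by
  have hc : ∀ i (x y : Ω), F^[i] (x * y) = F^[i] x * F^[i] y := fun i x y => iterate_map_mul F i x y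
  have hs : ∀ i (x y : Ω), F^[i] (x - y) = F^[i] x - F^[i] y := fun i x y => iterate_map_sub F i x y
  have hadd : ∀ i (x y : Ω), F^[i] (x + y) = F^[i] x + F^[i] y :=
    fun i x y => iterate_map_add F i x y
  have hγm : F^[m] γ ≠ γ := fun h0 => hm ((pow_dvd_pow l hn).trans ((hγ m).mp h0))
  have hγd : IsPeriodicPt F (l ^ n * e) γ := (hγ _).mpr (dvd_mul_right _ _)
  have h1 : b * (F^[m] γ - γ) = F^[m] φ - φ := by
    rw [h, hadd, hc, ha.eq, hb.eq]; ring
  have hbd : IsPeriodicPt F (l ^ n * e) b := by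
    have h2 := congrArg (F^[l ^ n * e]) h1
    have hcomm : ∀ x, F^[l ^ n * e] (F^[m] x) = F^[m] (F^[l ^ n * e] x) := by
      intro x; rw [← iterate_add_apply, ← iterate_add_apply, add_comm]
    rw [hc, hs, hs, hcomm, hcomm, hγd.eq, hφ.eq, ← h1] at h2
    exact mul_right_cancel₀ (sub_ne_zero.mpr hγm) h2
  have had : IsPeriodicPt F (l ^ n * e) a := by
    have : a = φ - b * γ := by rw [h]; ring
    rw [IsPeriodicPt, IsFixedPt, this, hs, hc, hφ.eq, hbd.eq, hγd.eq]
  have hg : Nat.gcd (l ^ n * e) m ∣ l ^ N * e := by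
    refine (Nat.gcd_mul_left_dvd_mul_gcd _ _ _).trans (mul_dvd_mul ?_ (Nat.gcd_dvd_left _ _))
    obtain ⟨i, _, hi⟩ := (Nat.dvd_prime_pow hl).mp (Nat.gcd_dvd_left (l ^ n) m)
    rw [hi]
    refine pow_dvd_pow l ?_
    by_contra hlt
    apply hm
    refine (pow_dvd_pow l (by omega : N ≤ i)).trans ?_
    rw [← hi]
    exact Nat.gcd_dvd_right _ _
  exact ⟨(had.gcd ha).trans_dvd hg, (hbd.gcd hb).trans_dvd hg⟩

/-- A root of a polynomial of degree `D` over the fixed field of `τ` has `τ`-period at most `D`. -/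
lemma aux_root_period {Ω : Type*} [Field Ω] (τ : Ω →+* Ω) (R : Polynomial Ω) (hR : R ≠ 0)
    (hτ : R.map τ = R) (φ : Ω) (hφ : R.eval φ = 0) (D : ℕ) (hD : R.natDegree ≤ D) :
    IsPeriodicPt τ (D.factorial) φ := by
  classical
  have hroot : ∀ i, τ^[i] φ ∈ R.roots.toFinset := by
    intro i
    rw [Multiset.mem_toFinset, mem_roots hR, IsRoot]
    induction i with
    | zero => simpa using hφ
    | succ i ih =>
      rw [iterate_succ_apply']
      conv_lhs => rw [← hτ]
      rw [eval_map_apply, ih, map_zero]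
  have hcard : R.roots.toFinset.card < (Finset.range (D + 1)).card := by
    rw [Finset.card_range]
    have := Multiset.toFinset_card_le R.roots
    have := R.card_roots'
    omega
  obtain ⟨i, hi, j, hj, hij, he⟩ := Finset.exists_ne_map_eq_of_card_lt_of_maps_to hcard
    (f := fun i => τ^[i] φ) (fun i _ => hroot i)
  wlog hlt : i < j generalizing i j
  · exact this j hj i hi hij.symm he.symm (by omega)
  have hp : IsPeriodicPt τ (j - i) φ := by
    have : τ^[i] (τ^[j - i] φ) = τ^[i] φ := by
      rw [← iterate_add_apply, Nat.add_sub_cancel' hlt.le]; exact he.symm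
    exact (τ.injective.iterate i) this
  rw [Finset.mem_range] at hj
  exact hp.trans_dvd (Nat.dvd_factorial (by omega) (by omega))

end Helpers

section Helpers2

open Polynomial Function

lemma aux_per_iff {k Ω : Type*} [Field k] [Fintype k] [Field Ω] [Algebra k Ω] (j : ℕ) (x : Ω) :
    IsPeriodicPt (FiniteField.frobeniusAlgHom k Ω) j x ↔ x ^ (Fintype.card k ^ j) = x := by
  rw [IsPeriodicPt, IsFixedPt, FiniteField.coe_frobeniusAlgHom, pow_iterate]

lemma aux_per_iff' {k Ω : Type*} [Field k] [Fintype k] [Field Ω] [Algebra k Ω] (j : ℕ) (x : Ω) :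
    IsPeriodicPt (FiniteField.frobeniusAlgHom k Ω) j x ↔
      aeval x (X ^ (Fintype.card k ^ j) - X : Polynomial k) = 0 := by
  rw [aux_per_iff]; simp [sub_eq_zero]

lemma aux_exists_gamma (k : Type*) [Field k] [Fintype k] (l : ℕ) (hl : l.Prime) (n : ℕ) :
    ∃ γ : AlgebraicClosure k, ∀ j : ℕ,
      IsPeriodicPt (FiniteField.frobeniusAlgHom k (AlgebraicClosure k)) j γ ↔ l ^ n ∣ j := by
  classical
  cases n with
  | zero =>
    refine ⟨0, fun j => ?_⟩
    rw [aux_per_iff]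
    simp [Fintype.card_ne_zero]
  | succ n =>
    set q := Fintype.card k with hq
    have hq1 : 1 < q := Fintype.one_lt_card
    set Ω := AlgebraicClosure k
    obtain ⟨p, hp⟩ := CharP.exists k
    obtain ⟨s, hpp, hs⟩ := FiniteField.card k p
    have hchar : CharP Ω p := charP_of_injective_algebraMap' k p
    have hfact : Fact p.Prime := ⟨hpp⟩
    have hsep : (X ^ (q ^ (l ^ (n + 1))) - X : Polynomial Ω).Separable := by
      refine galois_poly_separable p _ ?_
      rw [hq, hs, ← pow_mul]
      exact dvd_pow_self p (mul_ne_zero s.ne_zero (pow_ne_zero _ hl.ne_zero))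
    have h1 : ∀ i, 1 < q ^ (l ^ i) := fun i => Nat.one_lt_pow (pow_ne_zero _ hl.ne_zero) hq1
    have hcard : (X ^ (q ^ (l ^ (n + 1))) - X : Polynomial Ω).roots.toFinset.card =
        q ^ (l ^ (n + 1)) := by
      rw [Multiset.toFinset_card_of_nodup (nodup_roots hsep),
        ← (IsAlgClosed.splits _).natDegree_eq_card_roots,
        FiniteField.X_pow_card_sub_X_natDegree_eq _ (h1 _)]
    have hlt : (X ^ (q ^ (l ^ n)) - X : Polynomial Ω).roots.toFinset.card <
        (X ^ (q ^ (l ^ (n + 1))) - X : Polynomial Ω).roots.toFinset.card := by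
      rw [hcard]
      refine ((Multiset.toFinset_card_le _).trans (card_roots' _)).trans_lt ?_
      rw [FiniteField.X_pow_card_sub_X_natDegree_eq _ (h1 _)]
      exact Nat.pow_lt_pow_right hq1 (Nat.pow_lt_pow_right hl.one_lt (Nat.lt_succ_self n))
    obtain ⟨γ, hγ1, hγ2⟩ := Finset.exists_mem_notMem_of_card_lt_card hlt
    refine ⟨γ, fun j => ?_⟩
    have hfl : Fact l.Prime := ⟨hl⟩
    rw [isPeriodicPt_iff_minimalPeriod_dvd, minimalPeriod_eq_prime_pow (p := l) (k := n)]
    · rw [aux_per_iff]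
      intro h
      apply hγ2
      rw [Multiset.mem_toFinset, mem_roots (FiniteField.X_pow_card_sub_X_ne_zero _ (h1 _))]
      simpa [sub_eq_zero] using h
    · rw [aux_per_iff]
      rw [Multiset.mem_toFinset, mem_roots (FiniteField.X_pow_card_sub_X_ne_zero _ (h1 _))] at hγ1
      simpa [sub_eq_zero] using hγ1

lemma aux_exists_place {k K : Type*} [Field k] [Field K] [Algebra k K] (g : K)
    (hg : Transcendental k g) (γ : AlgebraicClosure k) :
    ∃ O : ValuationSubring K, (∀ c : k, algebraMap k K c ∈ O) ∧ O ≠ ⊤ ∧ g ∈ O ∧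
      ∀ c : Polynomial k, aeval g c ∈ O.nonunits ↔ aeval γ c = 0 := by
  have hint : IsIntegral k γ := Algebra.IsIntegral.isIntegral γ
  set P := minpoly k γ with hP
  have hirr : Irreducible P := minpoly.irreducible hint
  have hinj : Injective (aeval g : Polynomial k →ₐ[k] K) := transcendental_iff_injective.mp hg
  let A : Subring K := (aeval g : Polynomial k →ₐ[k] K).toRingHom.range
  have hA : ∀ c : Polynomial k, aeval g c ∈ A := fun c => ⟨c, rfl⟩
  obtain ⟨O, hO1, hO2⟩ := Ideal.image_subset_nonunits_valuationSubring
    (A := A) (Ideal.span {⟨aeval g P, hA P⟩}) (by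
      rw [Ne, Ideal.span_singleton_eq_top]
      intro hu
      obtain ⟨⟨v, w, rfl⟩, hv⟩ := hu.exists_right_inv
      have h1 : aeval g (P * w) = aeval g (1 : Polynomial k) := by
        have := congrArg Subtype.val hv
        simpa using this
      exact hirr.not_isUnit (IsUnit.of_mul_eq_one _ (hinj h1)))
  have hO3 : ∀ c : Polynomial k, aeval g c ∈ O := fun c => hO1 (hA c)
  have hPO : aeval g P ∈ O.nonunits := hO2 ⟨_, Ideal.subset_span rfl, rfl⟩
  have hmul : ∀ x y : K, x ∈ O.nonunits → y ∈ O → x * y ∈ O.nonunits := by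
    intro x y hx hy
    rw [ValuationSubring.mem_nonunits_iff] at hx ⊢
    rw [← O.valuation_le_one_iff] at hy
    rw [map_mul]
    exact mul_lt_one_of_lt_of_le hx hy
  refine ⟨O, fun c => by simpa using hO3 (C c), ?_, by simpa using hO3 X, ?_⟩
  · rintro rfl
    rw [ValuationSubring.mem_nonunits_iff_or] at hPO
    rcases hPO with h | h
    · exact hirr.ne_zero (hinj (by rw [h, map_zero]))
    · exact h trivial
  · intro c
    rw [← minpoly.dvd_iff, ← hP]
    constructor
    · intro hc
      by_contra hnd
      obtain ⟨u, v, huv⟩ := (hirr.coprime_iff_not_dvd).mpr hnd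
      have h1 := congrArg (aeval g : Polynomial k →ₐ[k] K) huv
      rw [map_add, map_mul, map_mul, map_one, mul_comm, mul_comm (aeval g v)] at h1
      have h2 := add_mem (hmul _ _ hPO (hO3 u)) (hmul _ _ hc (hO3 v))
      rw [h1, ValuationSubring.mem_nonunits_iff, map_one] at h2
      exact lt_irrefl _ h2
    · rintro ⟨d, rfl⟩
      rw [map_mul]
      exact hmul _ _ hPO (hO3 d)

lemma aux_nonunit {k K : Type*} [Field k] [Field K] [Algebra k K] (g h : K)
    (O : ValuationSubring K) (hk : ∀ c : Polynomial k, aeval g c ∈ O)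
    (R : Polynomial (Polynomial k)) (hR : R.eval₂ (aeval g : Polynomial k →ₐ[k] K).toRingHom h = 0)
    (hh : h ∈ O.nonunits) : aeval g (R.coeff 0) ∈ O.nonunits := by
  have hhO : h ∈ O := ValuationSubring.nonunits_subset hh
  have h1 := congrArg (eval₂ (aeval g : Polynomial k →ₐ[k] K).toRingHom h) (divX_mul_X_add R)
  rw [hR, eval₂_add, eval₂_mul, eval₂_X, eval₂_C] at h1
  have h2 : aeval g (R.coeff 0) = h * (- eval₂ (aeval g : Polynomial k →ₐ[k] K).toRingHom h R.divX) := by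
    have h3 : (aeval g : Polynomial k →ₐ[k] K).toRingHom (R.coeff 0) = aeval g (R.coeff 0) := rfl
    rw [h3] at h1
    linear_combination h1
  have h4 : eval₂ (aeval g : Polynomial k →ₐ[k] K).toRingHom h R.divX ∈ O := by
    rw [eval₂_eq_sum_range]
    exact sum_mem fun i _ => mul_mem (hk _) (pow_mem hhO i)
  rw [h2, ValuationSubring.mem_nonunits_iff, map_mul]
  rw [ValuationSubring.mem_nonunits_iff] at hh
  exact mul_lt_one_of_lt_of_le hh ((O.valuation_le_one_iff _).mpr (neg_mem h4))

lemma aux_algebraic {k K : Type} [Field k] [Field K] [Algebra k K]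
    (hK : IsFunctionFieldOneVar k K) (g : K) (hg : Transcendental k g) (h : K) (hh : h ≠ 0) :
    ∃ R : Polynomial (Polynomial k), R.coeff 0 ≠ 0 ∧
      R.eval₂ (aeval g : Polynomial k →ₐ[k] K).toRingHom h = 0 := by
  obtain ⟨⟨t, ht, hfin⟩, -⟩ := hK
  have hle : Algebra.trdeg k K ≤ 1 := by
    have : Algebra.IsAlgebraic (IntermediateField.adjoin k {t}) K := inferInstance
    have h2 : Algebra.IsAlgebraic (Algebra.adjoin k {t}) K := by
      exact ⟨fun x => IntermediateField.isAlgebraic_adjoin_iff.mp (this.isAlgebraic x)⟩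
    simpa using Algebra.IsAlgebraic.trdeg_le_cardinalMk (R := k) (A := K) ({t} : Set K)
  have hgi : AlgebraicIndependent k (fun _ : Unit => g) := by
    rw [algebraicIndependent_unique_type_iff]; exact hg
  have hb := hgi.isTranscendenceBasis_of_trdeg_le_of_finite (by simpa using hle)
  have halg := hb.isAlgebraic
  have hr : Set.range (fun _ : Unit => g) = {g} := by simp
  rw [hr] at halg
  obtain ⟨R, hR0, hR⟩ := (halg.isAlgebraic h).exists_nonzero_coeff_and_aeval_eq_zero
    (mem_nonZeroDivisors_of_ne_zero hh)
  let e : Polynomial k →+* Algebra.adjoin k {g} :=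
    ((aeval g : Polynomial k →ₐ[k] K).codRestrict _ (fun c => aeval_mem_adjoin_singleton k g)).toRingHom
  have he : Surjective e := by
    rintro ⟨x, hx⟩
    rw [Algebra.adjoin_singleton_eq_range_aeval] at hx
    obtain ⟨c, hc⟩ := hx
    exact ⟨c, Subtype.ext hc⟩
  obtain ⟨R', rfl⟩ := map_surjective e he R
  refine ⟨R', ?_, ?_⟩
  · intro h0; rw [coeff_map, h0, map_zero] at hR0; exact hR0 rfl
  · rw [aeval_def, eval₂_map] at hR
    exact hR

end Helpers2

section Helpers3

open Polynomial Function

lemma aux_place_s14 {k K : Type} [Field k] [Fintype k] [Field K] [Algebra k K]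
    (p : ℕ) (hp : p.Prime) [CharP k p] (l N : ℕ) (S : Set ℕ) (hl : l.Prime) (hN : 1 ≤ N)
    (hT : ∀ r ∈ {r : ℕ | r.Prime ∧ r ∉ S}, r.Prime → r ≠ p → ∀ j : ℕ, 1 ≤ j →
      ¬ l ^ N ∣ orderOf ((Fintype.card k : ZMod (r ^ j))))
    (f g : K) (O : ValuationSubring K) (hk : ∀ c : k, algebraMap k K c ∈ O)
    (hfO : f ∈ O) (hgO : g ∈ O) (γ : AlgebraicClosure k) (n : ℕ) (hn : N ≤ n)
    (hγ : ∀ j : ℕ,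
      IsPeriodicPt (FiniteField.frobeniusAlgHom k (AlgebraicClosure k)) j γ ↔ l ^ n ∣ j)
    (hO : ∀ c : Polynomial k, aeval g c ∈ O.nonunits ↔ aeval γ c = 0)
    (R : Polynomial (Polynomial k)) (hR0 : aeval γ (R.coeff 0) ≠ 0)
    (hR : R.eval₂ (aeval g : Polynomial k →ₐ[k] K).toRingHom f = 0)
    {Ω : Type} [Field Ω] (ev : O →+* Ω) (hev : ∀ x : O, ev x = 0 ↔ (x : K) ∈ O.nonunits)
    (a b : Ω) (ha : PrimaryOutside S a) (hb : PrimaryOutside S b)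
    (hab : ev ⟨f, hfO⟩ = a + b * ev ⟨g, hgO⟩) :
    a ^ (Fintype.card k ^ (l ^ N * R.natDegree.factorial)) = a ∧
    b ^ (Fintype.card k ^ (l ^ N * R.natDegree.factorial)) = b := by
  let ι : k →+* O := (algebraMap k K).codRestrict O.toSubring hk
  let _ : Algebra k Ω := (ev.comp ι).toAlgebra
  set γ' : Ω := ev ⟨g, hgO⟩ with hγ'
  set φ : Ω := ev ⟨f, hfO⟩ with hφ
  change φ = a + b * γ' at hab
  have hK : ∀ c : Polynomial k, ((eval₂ ι ⟨g, hgO⟩ c : O) : K) = aeval g c := by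
    intro c
    have := hom_eval₂ c ι O.subtype ⟨g, hgO⟩
    exact this
  have hΩ : ∀ c : Polynomial k, ev (eval₂ ι ⟨g, hgO⟩ c) = aeval γ' c := by
    intro c
    exact hom_eval₂ c ι ev ⟨g, hgO⟩
  have htrans : ∀ c : Polynomial k, aeval γ' c = 0 ↔ aeval γ c = 0 := by
    intro c
    rw [← hΩ, hev, hK, hO]
  set F := FiniteField.frobeniusAlgHom k Ω
  have hγF : ∀ j, IsPeriodicPt F j γ' ↔ l ^ n ∣ j := by
    intro j
    rw [aux_per_iff', htrans, ← aux_per_iff', hγ]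
  let e : Polynomial k →+* O := eval₂RingHom ι ⟨g, hgO⟩
  have hRO : R.eval₂ e ⟨f, hfO⟩ = 0 := by
    apply Subtype.val_injective
    have h1 := hom_eval₂ R e O.subtype ⟨f, hfO⟩
    refine h1.trans ?_
    have h2 : O.subtype.comp e = (aeval g : Polynomial k →ₐ[k] K).toRingHom :=
      RingHom.ext fun c => hK c
    rw [h2]
    exact hR
  have hev2 : ev.comp e = (aeval γ' : Polynomial k →ₐ[k] Ω).toRingHom :=
    RingHom.ext fun c => hΩ c
  have hRφ : (R.map (aeval γ' : Polynomial k →ₐ[k] Ω).toRingHom).eval φ = 0 := by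
    rw [eval_map, ← hev2, ← hom_eval₂, hRO, map_zero]
  have hRne : R.map (aeval γ' : Polynomial k →ₐ[k] Ω).toRingHom ≠ 0 := by
    intro h0
    have h1 := congrArg (fun P => coeff P 0) h0
    simp only [coeff_map, coeff_zero] at h1
    exact hR0 ((htrans _).mp h1)
  let τ : Ω →ₐ[k] Ω := F ^ (l ^ n)
  have hτ : ∀ x, τ x = F^[l ^ n] x := by
    intro x
    rw [← AlgHom.coe_pow]
  have hτR : (R.map (aeval γ' : Polynomial k →ₐ[k] Ω).toRingHom).map τ.toRingHom =
      R.map (aeval γ' : Polynomial k →ₐ[k] Ω).toRingHom := by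
    rw [Polynomial.map_map]
    congr 1
    refine RingHom.ext fun c => ?_
    change τ (aeval γ' c) = aeval γ' c
    rw [← aeval_algHom_apply, hτ, ((hγF _).mpr dvd_rfl).eq]
  have hφp := aux_root_period τ.toRingHom _ hRne hτR φ hRφ R.natDegree natDegree_map_le
  have hφF : IsPeriodicPt F (l ^ n * R.natDegree.factorial) φ := by
    have h1 : (⇑τ.toRingHom : Ω → Ω) = F^[l ^ n] := funext hτ
    rw [h1] at hφp
    rw [IsPeriodicPt, IsFixedPt, iterate_mul]
    exact hφp
  obtain ⟨m1, h10, h11, h12⟩ := aux_primary_s14 (k := k) p hp l N S hl hN hT a ha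
  obtain ⟨m2, h20, h21, h22⟩ := aux_primary_s14 (k := k) p hp l N S hl hN hT b hb
  have hfin := aux_core F.toRingHom γ' φ a b hab l N n R.natDegree.factorial (Nat.lcm m1 m2) hl hγF
    hn (aux_not_dvd_lcm l N m1 m2 hl h10 h20 h11 h21) (h12.trans_dvd (Nat.dvd_lcm_left _ _))
    (h22.trans_dvd (Nat.dvd_lcm_right _ _)) hφF
  exact ⟨(aux_per_iff (k := k) _ _).mp hfin.1, (aux_per_iff (k := k) _ _).mp hfin.2⟩

end Helpers3

/-- **Proposition 3.11 (combined with the descent of Definition/Proposition 3.5),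
`Q̄_{1,Σ} ⟹ P_Σ`.** Let `K` be a function field of one variable over a finite field `k`
of cardinality `q` and characteristic `p`, and let `S` be a `k`-large set of primes. If
`f, g ∈ K ∖ k` are such that for all but finitely many places `O` of `K` with
`f, g ∈ O` one has `f(O) = a + b·g(O)` in an algebraic closure of the residue field for
some nonzero `a, b` of `S'`-primary order, then `f = a + b·g` for some `a, b ∈ k^×` of
`S'`-primary order. -/
theorem prop_3_11
    (k K : Type) [Field k] [Fintype k] [Field K] [Algebra k K]
    (p q : ℕ) (hp : p.Prime) [CharP k p] (hq : q = Fintype.card k)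
    (hK : IsFunctionFieldOneVar k K)
    (S : Set ℕ) (hlarge : IsLargeFor q p S)
    (f g : K) (hf : f ∉ (algebraMap k K).range) (hg : g ∉ (algebraMap k K).range)
    (hQ : {O : ValuationSubring K |
      (∀ c : k, algebraMap k K c ∈ O) ∧ O ≠ ⊤ ∧
      ∃ (hfO : f ∈ O) (hgO : g ∈ O),
        ¬ ∃ a b : AlgebraicClosure (IsLocalRing.ResidueField ↥O),
          a ≠ 0 ∧ b ≠ 0 ∧ PrimaryOutside S a ∧ PrimaryOutside S b ∧
          algebraMap (IsLocalRing.ResidueField ↥O) (AlgebraicClosure (IsLocalRing.ResidueField ↥O))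
              (IsLocalRing.residue ↥O ⟨f, hfO⟩) =
            a + b * algebraMap (IsLocalRing.ResidueField ↥O)
              (AlgebraicClosure (IsLocalRing.ResidueField ↥O))
              (IsLocalRing.residue ↥O ⟨g, hgO⟩)}.Finite) :
    ∃ a b : k, a ≠ 0 ∧ b ≠ 0 ∧ PrimaryOutside S a ∧ PrimaryOutside S b ∧
      f = algebraMap k K a + algebraMap k K b * g := by
  classical
  subst hq
  have halgk := hK.2
  have htr : ∀ x : K, x ∉ (algebraMap k K).range → Transcendental k x :=
    fun x hx h => hx (halgk x h)
  have hgt := htr g hg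
  have hf0 : f ≠ 0 := by
    rintro rfl
    exact hf (zero_mem _)
  obtain ⟨l, N', hl, hT'⟩ := hlarge
  have hT : ∀ r ∈ {r : ℕ | r.Prime ∧ r ∉ S}, r.Prime → r ≠ p → ∀ j : ℕ, 1 ≤ j →
      ¬ l ^ (N' + 1) ∣ orderOf ((Fintype.card k : ZMod (r ^ j))) :=
    fun r hr hr' hrp j hj hd => hT' r hr hr' hrp j hj ((pow_dvd_pow l (Nat.le_succ N')).trans hd)
  set N := N' + 1 with hNdef
  have hN : 1 ≤ N := by omega
  obtain ⟨R, hR0, hR⟩ := aux_algebraic hK g hgt f hf0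
  set M := l ^ N * R.natDegree.factorial with hM
  have hM0 : M ≠ 0 := mul_ne_zero (pow_ne_zero _ hl.ne_zero) (Nat.factorial_ne_zero _)
  set Q := Fintype.card k ^ M with hQdef
  have hQ1 : 1 < Q := Nat.one_lt_pow hM0 Fintype.one_lt_card
  choose γ hγ using aux_exists_gamma k l hl
  have hγinj : Function.Injective γ := by
    intro i j hij
    have h1 : l ^ i ∣ l ^ j := by rw [← hγ i, hij, hγ j]
    have h2 : l ^ j ∣ l ^ i := by rw [← hγ j, ← hij, hγ i]
    exact Nat.pow_right_injective hl.two_le (Nat.dvd_antisymm h1 h2)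
  choose O hOk hOtop hOg hO using fun n => aux_exists_place g hgt (γ n)
  have hOinj : Function.Injective O := by
    intro i j hij
    have h0 : ∀ c : Polynomial k, Polynomial.aeval (γ i) c = 0 ↔ Polynomial.aeval (γ j) c = 0 := by
      intro c
      rw [← hO, ← hO, hij]
    have h1 : ∀ d, l ^ i ∣ d ↔ l ^ j ∣ d := by
      intro d
      rw [← hγ i, ← hγ j, aux_per_iff', aux_per_iff', h0]
    exact Nat.pow_right_injective hl.two_le
      (Nat.dvd_antisymm ((h1 _).mpr dvd_rfl) ((h1 _).mp dvd_rfl))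
  have hOpoly : ∀ n (c : Polynomial k), Polynomial.aeval g c ∈ O n := by
    intro n c
    rw [Polynomial.aeval_eq_sum_range]
    refine sum_mem fun i _ => ?_
    rw [Algebra.smul_def]
    exact mul_mem (hOk n _) (pow_mem (hOg n) i)
  have hev1 : ∀ c : Polynomial k, c ≠ 0 →
      ∀ᶠ n in Filter.cofinite, Polynomial.aeval (γ n) c ≠ 0 := by
    intro c hc
    have hfin : (c.rootSet (AlgebraicClosure k)).Finite := Polynomial.rootSet_finite _ _
    have := hγinj.tendsto_cofinite.eventually hfin.eventually_cofinite_notMem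
    filter_upwards [this] with n hn h0
    exact hn ((Polynomial.mem_rootSet).mpr ⟨hc, h0⟩)
  have hev2 : ∀ h : K, h ≠ 0 → ∀ᶠ n in Filter.cofinite, h ∉ (O n).nonunits := by
    intro h hh
    obtain ⟨R', hRzero, hR'⟩ := aux_algebraic hK g hgt h hh
    filter_upwards [hev1 _ hRzero] with n hn hmem
    exact hn ((hO n _).mp (aux_nonunit g h (O n) (hOpoly n) R' hR' hmem))
  have hXQ : (Polynomial.X ^ Q - Polynomial.X : Polynomial k) ≠ 0 :=
    FiniteField.X_pow_card_sub_X_ne_zero _ hQ1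
  let ev : ∀ n, O n →+* AlgebraicClosure (IsLocalRing.ResidueField ↥(O n)) :=
    fun n => (algebraMap _ _).comp (IsLocalRing.residue ↥(O n))
  have hev : ∀ n, ∀ x : O n, ev n x = 0 ↔ (x : K) ∈ (O n).nonunits := by
    intro n x
    rw [ValuationSubring.coe_mem_nonunits_iff, ← IsLocalRing.residue_eq_zero_iff]
    exact map_eq_zero (algebraMap (IsLocalRing.ResidueField ↥(O n))
      (AlgebraicClosure (IsLocalRing.ResidueField ↥(O n))))
  have key : ∀ᶠ n in Filter.cofinite, ∃ hfO : f ∈ O n,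
      ∃ a b : AlgebraicClosure (IsLocalRing.ResidueField ↥(O n)),
        a ≠ 0 ∧ b ≠ 0 ∧ PrimaryOutside S a ∧ PrimaryOutside S b ∧
        ev n ⟨f, hfO⟩ = a + b * ev n ⟨g, hOg n⟩ ∧ a ^ Q = a ∧ b ^ Q = b ∧
        (ev n ⟨g, hOg n⟩) ^ Q ≠ ev n ⟨g, hOg n⟩ := by
    have hge : ∀ᶠ n in Filter.cofinite, N ≤ n := by
      rw [Nat.cofinite_eq_atTop]; exact Filter.eventually_ge_atTop N
    filter_upwards [hOinj.tendsto_cofinite.eventually hQ.eventually_cofinite_notMem,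
      hev1 _ hR0, hev1 _ hXQ, hev2 _ (inv_ne_zero hf0), hge] with n h1 h2 h3 h4 h5
    have hfO : f ∈ O n := by
      by_contra hc
      exact h4 ((ValuationSubring.inv_mem_nonunits_iff _).mpr (Or.inr hc))
    refine ⟨hfO, ?_⟩
    have h6 : ∃ a b : AlgebraicClosure (IsLocalRing.ResidueField ↥(O n)),
          a ≠ 0 ∧ b ≠ 0 ∧ PrimaryOutside S a ∧ PrimaryOutside S b ∧
          ev n ⟨f, hfO⟩ = a + b * ev n ⟨g, hOg n⟩ := by
      by_contra hc
      exact h1 ⟨hOk n, hOtop n, hfO, hOg n, hc⟩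
    obtain ⟨a, b, ha0, hb0, ha, hb, hab⟩ := h6
    obtain ⟨haQ, hbQ⟩ := aux_place_s14 p hp l N S hl hN hT f g (O n) (hOk n) hfO (hOg n) (γ n) n h5
      (hγ n) (hO n) R h2 hR (ev n) (hev n) a b ha hb hab
    refine ⟨a, b, ha0, hb0, ha, hb, hab, haQ, hbQ, ?_⟩
    intro h7
    apply h3
    rw [← hO n]
    have h8 := (hev n (⟨g, hOg n⟩ ^ Q - ⟨g, hOg n⟩)).mp (by rw [map_sub, map_pow, h7, sub_self])
    simpa using h8
  have hpQ : ∀ (E : Type) [Field E] [CharP E p], ∀ x y : E,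
      (x + y) ^ Q = x ^ Q + y ^ Q ∧ (x - y) ^ Q = x ^ Q - y ^ Q := by
    intro E _ _ x y
    have : Fact p.Prime := ⟨hp⟩
    obtain ⟨s, _, hs⟩ := FiniteField.card k p
    have h1 : Q = p ^ (s * M) := by rw [hQdef, hs, ← pow_mul]
    rw [h1]
    exact ⟨add_pow_char_pow .., sub_pow_char_pow ..⟩
  have hcK : CharP K p := charP_of_injective_algebraMap' k p
  have hrel : (f ^ Q - f) * ((g ^ Q) ^ Q - g) - ((f ^ Q) ^ Q - f) * (g ^ Q - g) = 0 := by
    by_contra hne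
    obtain ⟨n, ⟨hfO, a, b, -, -, -, -, hab, haQ, hbQ, -⟩, h2⟩ := (key.and (hev2 _ hne)).exists
    apply h2
    set F : O n := ⟨f, hfO⟩
    set G : O n := ⟨g, hOg n⟩
    have h3 := (hev n ((F ^ Q - F) * ((G ^ Q) ^ Q - G) - ((F ^ Q) ^ Q - F) * (G ^ Q - G))).mp (by
      have : CharP (AlgebraicClosure (IsLocalRing.ResidueField ↥(O n))) p := by
        let ι : k →+* O n := (algebraMap k K).codRestrict (O n).toSubring (hOk n)
        exact charP_of_injective_ringHom ((ev n).comp ι).injective p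
      have h4 : (ev n F) ^ Q = a + b * (ev n G) ^ Q := by
        rw [hab, (hpQ _ _ _).1, mul_pow, haQ, hbQ]
      have h5 : ((ev n F) ^ Q) ^ Q = a + b * ((ev n G) ^ Q) ^ Q := by
        rw [h4, (hpQ _ _ _).1, mul_pow, haQ, hbQ]
      simp only [map_sub, map_mul, map_pow]
      rw [h5, h4, hab]
      ring)
    simpa using h3
  have hgQ : g ^ Q - g ≠ 0 := by
    intro h0
    apply hgt
    exact ⟨_, hXQ, by simpa using h0⟩
  have hconst : ∀ x : K, x ^ Q = x → ∃ c : k, algebraMap k K c = x := by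
    intro x hx
    exact halgk x ⟨_, hXQ, by simp [hx]⟩
  obtain ⟨b, hb⟩ := hconst ((f ^ Q - f) / (g ^ Q - g)) (by
    have hgQ2 : (g ^ Q) ^ Q - g ^ Q ≠ 0 := by
      rw [← (hpQ _ _ _).2]; exact pow_ne_zero _ hgQ
    rw [div_pow, (hpQ _ _ _).2, (hpQ _ _ _).2, div_eq_div_iff hgQ2 hgQ]
    linear_combination -hrel)
  have hbK : algebraMap k K b * (g ^ Q - g) = f ^ Q - f := by
    rw [hb, div_mul_cancel₀ _ hgQ]
  have hkQ : ∀ c : k, c ^ Q = c := fun c => FiniteField.pow_card_pow M c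
  have hkQ' : ∀ c : k, (algebraMap k K c) ^ Q = algebraMap k K c := fun c => by
    rw [← map_pow, hkQ]
  obtain ⟨a, ha⟩ := hconst (f - algebraMap k K b * g) (by
    rw [(hpQ _ _ _).2, mul_pow, hkQ']
    linear_combination -hbK)
  have hfab : f = algebraMap k K a + algebraMap k K b * g := by rw [ha]; ring
  obtain ⟨n, hfO, a', b', ha0, hb0, haS, hbS, hab, haQ, hbQ, hγQ⟩ := key.exists
  let ι : k →+* O n := (algebraMap k K).codRestrict (O n).toSubring (hOk n)
  let j := (ev n).comp ι
  have : CharP (AlgebraicClosure (IsLocalRing.ResidueField ↥(O n))) p :=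
    charP_of_injective_ringHom j.injective p
  have hab2 : ev n ⟨f, hfO⟩ = j a + j b * ev n ⟨g, hOg n⟩ := by
    have h1 : (⟨f, hfO⟩ : O n) = ι a + ι b * ⟨g, hOg n⟩ := Subtype.ext hfab
    rw [h1, map_add, map_mul]
    rfl
  have hjQ : ∀ c, (j c) ^ Q = j c := fun c => by rw [← map_pow, hkQ]
  have e1 := congrArg (· ^ Q) (hab.symm.trans hab2)
  simp only [(hpQ _ _ _).1, mul_pow, haQ, hbQ, hjQ] at e1
  have e2 := hab.symm.trans hab2
  have hbb : b' = j b := by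
    have h0 : (b' - j b) * ((ev n ⟨g, hOg n⟩) ^ Q - ev n ⟨g, hOg n⟩) = 0 := by
      linear_combination e1 - e2
    rcases mul_eq_zero.mp h0 with h | h
    · exact sub_eq_zero.mp h
    · exact absurd (sub_eq_zero.mp h) hγQ
  have haa : a' = j a := by
    rw [hbb] at e2
    exact add_right_cancel e2
  subst hbb haa
  have hprim : ∀ c : k, PrimaryOutside S (j c) → PrimaryOutside S c := by
    intro c hc
    have h1 : orderOf (j c) = orderOf c := orderOf_injective j.toMonoidHom j.injective c
    refine ⟨?_, fun r hr hd => hc.2 r hr (h1 ▸ hd)⟩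
    rw [← orderOf_pos_iff, ← h1, orderOf_pos_iff]
    exact hc.1
  exact ⟨a, b, fun h => ha0 (by rw [h, map_zero]), fun h => hb0 (by rw [h, map_zero]),
    hprim a haS, hprim b hbS, hfab⟩
end

section
/- (Descent step of Definition/Proposition 3.12 (i)) Let m be a positive integer, k a finite field, and K a field extension of k in which k is algebraically closed. Let K̄ be an algebraic closure of K and let k̄ be the algebraic closure of k inside K̄. Let f, g ∈ K with g ∉ k, and suppose a, c ∈ k̄ are nonzero and satisfy f = a·(1 + c·g)^m in K̄. Then a, c ∈ k. In particular, for any set Σ of prime numbers, if a and c have Σ'-primary order then f = a·(1 + c·g)^m with a, c ∈ k^× of Σ'-primary order. -/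
open Polynomial in
theorem descent_fixed_aux {K E : Type} [Field K] [Field E] [Algebra K E] [IsAlgClosure K E]
    (x : E) (hs : (minpoly K x).Separable) (hx : ∀ σ : E ≃ₐ[K] E, σ x = x) :
    x ∈ (algebraMap K E).range := by
  have : IsAlgClosed E := IsAlgClosure.isAlgClosed K
  have : Algebra.IsAlgebraic K E := IsAlgClosure.isAlgebraic
  have : Normal K E := IsAlgClosure.normal K E
  have hint : IsIntegral K x := Algebra.IsIntegral.isIntegral x
  have hcard := card_rootSet_eq_natDegree (K := E) hs (IsAlgClosed.splits _)
  have hsub : ∀ y ∈ (minpoly K x).rootSet E, y = x := by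
    intro y hy
    have h0 : aeval y (minpoly K x) = 0 := aeval_eq_zero_of_mem_rootSet hy
    obtain ⟨σ, hσ⟩ := minpoly.exists_algEquiv_of_root (Algebra.IsAlgebraic.isAlgebraic x) h0
    exact σ.injective (hσ.trans (hx σ).symm)
  have hle : (minpoly K x).natDegree ≤ 1 := by
    rw [← hcard, Fintype.card_le_one_iff]
    rintro ⟨u, hu⟩ ⟨v, hv⟩
    exact Subtype.ext ((hsub u hu).trans (hsub v hv).symm)
  have hpos := minpoly.natDegree_pos hint
  exact minpoly.natDegree_eq_one_iff.mp (by omega)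

open Polynomial in
theorem descent_ident_aux {k E : Type} [Field k] [Field E] [Algebra k E]
    (m : ℕ) (hm : 0 < m) (g : E) (hg : Transcendental k g)
    (a c a' c' : E) (ha : IsAlgebraic k a) (hc : IsAlgebraic k c)
    (ha' : IsAlgebraic k a') (hc' : IsAlgebraic k c') (hc0 : c ≠ 0) (ha0' : a' ≠ 0)
    (h : a * (1 + c * g) ^ m = a' * (1 + c' * g) ^ m) : a' = a ∧ c' = c := by
  let L := algebraicClosure k E
  have htr : Transcendental L g := fun hL => hg (hL.restrictScalars k)
  lift a to L using mem_algebraicClosure_iff.mpr ha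
  lift c to L using mem_algebraicClosure_iff.mpr hc
  lift a' to L using mem_algebraicClosure_iff.mpr ha'
  lift c' to L using mem_algebraicClosure_iff.mpr hc'
  have hP : (C a * (1 + C c * X) ^ m : L[X]) = C a' * (1 + C c' * X) ^ m := by
    apply transcendental_iff_injective.mp htr
    simpa using h
  have hc0' : c ≠ 0 := by rintro rfl; simp at hc0
  have ha0'' : a' ≠ 0 := by rintro rfl; simp at ha0'
  have h1 := congrArg (eval 0) hP
  have h2 := congrArg (eval (-c⁻¹)) hP
  simp [hc0', ha0'', hm.ne'] at h1 h2
  refine ⟨by rw [h1], ?_⟩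
  have h3 : c' = c := by
    have h4 : c' * c⁻¹ = 1 := by
      rw [← sub_eq_add_neg, sub_eq_zero] at h2
      exact h2.symm
    field_simp at h4
    exact h4
  rw [h3]

/-- **Descent step of Definition/Proposition 3.12 (i) (`P̄_Σ^{(m)} ⟹ P_Σ^{(m)}`).**
Let `k` be a finite field algebraically closed in `K`, let `K̄` be an algebraic closure of
`K` and `k̄` the algebraic closure of `k` inside `K̄` (elements algebraic over `k`). If
`f, g ∈ K` with `g ∉ k` and `f = a·(1 + c·g)^m` with `a, c ∈ k̄` nonzero, then
`a, c ∈ k`; in particular if `a, c` are of `Σ'`-primary order then `f = a·(1 + c·g)^m`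
with `a, c ∈ k^×` of `Σ'`-primary order. -/
theorem descent_power
    (m : ℕ) (hm : 0 < m)
    (k K Kbar : Type) [Field k] [Finite k] [Field K] [Algebra k K]
    [Field Kbar] [Algebra K Kbar] [IsAlgClosure K Kbar]
    [Algebra k Kbar] [IsScalarTower k K Kbar]
    (halg : ∀ x : K, IsAlgebraic k x → x ∈ (algebraMap k K).range)
    (f g : K) (hg : g ∉ (algebraMap k K).range)
    (a c : Kbar) (ha : IsAlgebraic k a) (hc : IsAlgebraic k c)
    (ha0 : a ≠ 0) (hc0 : c ≠ 0)
    (heq : algebraMap K Kbar f = a * (1 + c * algebraMap K Kbar g) ^ m) :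
    ∃ a₀ c₀ : k, algebraMap k Kbar a₀ = a ∧ algebraMap k Kbar c₀ = c ∧
      a₀ ≠ 0 ∧ c₀ ≠ 0 ∧
      f = algebraMap k K a₀ * (1 + algebraMap k K c₀ * g) ^ m ∧
      ∀ S : Set ℕ,
        (PrimaryOutside S a → PrimaryOutside S a₀) ∧
        (PrimaryOutside S c → PrimaryOutside S c₀) := by
  have hgK : Transcendental k g := fun h => hg (halg g h)
  have hgE : Transcendental k (algebraMap K Kbar g) := fun h =>
    hgK ((isAlgebraic_algebraMap_iff (algebraMap K Kbar).injective).mp h)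
  have key : ∀ σ : Kbar ≃ₐ[K] Kbar, σ a = a ∧ σ c = c := by
    intro σ
    have h := congrArg σ heq
    simp only [map_mul, map_pow, map_add, map_one, AlgEquiv.commutes] at h
    rw [heq] at h
    exact descent_ident_aux m hm _ hgE a c (σ a) (σ c) ha hc
      (ha.algHom (σ.toAlgHom.restrictScalars k)) (hc.algHom (σ.toAlgHom.restrictScalars k))
      hc0 (by simpa using ha0) h
  have desc : ∀ x : Kbar, IsAlgebraic k x → (∀ σ : Kbar ≃ₐ[K] Kbar, σ x = x) →
      ∃ y : k, algebraMap k Kbar y = x := by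
    intro x hx hσ
    have hsep : (minpoly k x).Separable :=
      PerfectField.separable_of_irreducible (minpoly.irreducible hx.isIntegral)
    have hsK : (minpoly K x).Separable :=
      (hsep.map (f := algebraMap k K)).of_dvd (minpoly.dvd_map_of_isScalarTower k K x)
    obtain ⟨z, rfl⟩ := descent_fixed_aux x hsK hσ
    obtain ⟨y, rfl⟩ := halg z ((isAlgebraic_algebraMap_iff (algebraMap K Kbar).injective).mp hx)
    exact ⟨y, IsScalarTower.algebraMap_apply k K Kbar y⟩
  obtain ⟨a₀, rfl⟩ := desc a ha fun σ => (key σ).1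
  obtain ⟨c₀, rfl⟩ := desc c hc fun σ => (key σ).2
  have prim : ∀ (S : Set ℕ) (x : k), PrimaryOutside S (algebraMap k Kbar x) →
      PrimaryOutside S x := by
    intro S x hx
    have hinj : Function.Injective (algebraMap k Kbar : k →* Kbar) :=
      (algebraMap k Kbar).injective
    have ho : orderOf (algebraMap k Kbar x) = orderOf x := orderOf_injective _ hinj x
    refine ⟨?_, fun l hl hd => hx.2 l hl (ho ▸ hd)⟩
    rw [← orderOf_pos_iff, ← ho]
    exact hx.1.orderOf_pos
  refine ⟨a₀, c₀, rfl, rfl, by rintro rfl; simp at ha0, by rintro rfl; simp at hc0, ?_,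
    fun S => ⟨prim S a₀, prim S c₀⟩⟩
  apply (algebraMap K Kbar).injective
  rw [heq]
  simp [← IsScalarTower.algebraMap_apply k K Kbar]
end

section
/- (Lemma 4.8, abstract form) Let κ ⊆ 𝒦 be a field extension and let g ∈ 𝒦 ∖ κ. Let U be a subgroup of 𝒦^× containing κ^× and of finite index n in 𝒦^×, and assume the cardinality of κ is greater than 2n (in particular, this holds whenever κ is infinite). Then there exist three pairwise distinct elements a, b, c ∈ κ such that, setting f := ((a−b)/(b−c))·((g−c)/(g−a)) ∈ 𝒦, one has f ∈ U, 1 + f ∈ U, and f ∉ κ. In particular, f is a fractional linear transformation of g with coefficients in κ, so that when 𝒦 is a function field the degree of f equals the degree of g. -/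
/-- **Lemma 4.8 (abstract form).** Let `κ ⊆ 𝒦` be a field extension, `g ∈ 𝒦 ∖ κ`, and
`U` a subgroup of `𝒦ˣ` containing `κˣ` of finite index `n`, with `#κ > 2n`. Then there
are pairwise distinct `a, b, c ∈ κ` such that the fractional linear transformation
`f = ((a−b)/(b−c))·((g−c)/(g−a))` of `g` satisfies `f ∈ U`, `1 + f ∈ U` and `f ∉ κ`. -/
theorem lemma_4_8
    (κ 𝒦 : Type) [Field κ] [Field 𝒦] [Algebra κ 𝒦]
    (g : 𝒦) (hg : g ∉ (algebraMap κ 𝒦).range)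
    (U : Subgroup 𝒦ˣ)
    (hκU : ∀ x : κˣ, Units.map (algebraMap κ 𝒦).toMonoidHom x ∈ U)
    (hfin : U.index ≠ 0)
    (hcard : ((2 * U.index : ℕ) : Cardinal) < Cardinal.mk κ) :
    ∃ a b c : κ, a ≠ b ∧ b ≠ c ∧ a ≠ c ∧
      ((∃ u : 𝒦ˣ, (u : 𝒦) =
          (algebraMap κ 𝒦 a - algebraMap κ 𝒦 b) / (algebraMap κ 𝒦 b - algebraMap κ 𝒦 c) *
            ((g - algebraMap κ 𝒦 c) / (g - algebraMap κ 𝒦 a)) ∧ u ∈ U) ∧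
       (∃ w : 𝒦ˣ, (w : 𝒦) = 1 +
          (algebraMap κ 𝒦 a - algebraMap κ 𝒦 b) / (algebraMap κ 𝒦 b - algebraMap κ 𝒦 c) *
            ((g - algebraMap κ 𝒦 c) / (g - algebraMap κ 𝒦 a)) ∧ w ∈ U) ∧
       (algebraMap κ 𝒦 a - algebraMap κ 𝒦 b) / (algebraMap κ 𝒦 b - algebraMap κ 𝒦 c) *
          ((g - algebraMap κ 𝒦 c) / (g - algebraMap κ 𝒦 a)) ∉ (algebraMap κ 𝒦).range) := by
  classical
  have hne : ∀ x : κ, g - algebraMap κ 𝒦 x ≠ 0 := fun x h =>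
    hg ⟨x, (sub_eq_zero.mp h).symm⟩
  have hd : ∀ x y : κ, x ≠ y → algebraMap κ 𝒦 x - algebraMap κ 𝒦 y ≠ 0 := fun x y h h' =>
    h ((algebraMap κ 𝒦).injective (sub_eq_zero.mp h'))
  have hdU : ∀ (x y : κ) (h : x ≠ y), Units.mk0 _ (hd x y h) ∈ U := by
    intro x y h
    have := hκU (Units.mk0 (x - y) (sub_ne_zero.mpr h))
    convert this using 1
    ext
    simp
  haveI : U.FiniteIndex := ⟨hfin⟩
  letI : Fintype (𝒦ˣ ⧸ U) := Fintype.ofFinite _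
  have hs : ∃ s : Finset κ, s.card = 2 * U.index + 1 := by
    rcases finite_or_infinite κ with hf | hi
    · letI := Fintype.ofFinite κ
      rw [Cardinal.mk_fintype] at hcard
      have h2 : 2 * U.index < Fintype.card κ := by exact_mod_cast hcard
      obtain ⟨s, -, hs⟩ := Finset.exists_subset_card_eq
        (s := (Finset.univ : Finset κ)) (n := 2 * U.index + 1) (by simpa using h2)
      exact ⟨s, hs⟩
    · exact Infinite.exists_subset_card_eq κ _
  obtain ⟨s, hs⟩ := hs
  let q : κ → 𝒦ˣ ⧸ U := fun x => QuotientGroup.mk (Units.mk0 _ (hne x))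
  obtain ⟨y, -, hy⟩ := Finset.exists_lt_card_fiber_of_mul_lt_card_of_maps_to
    (s := s) (t := Finset.univ) (f := q) (n := 2) (fun _ _ => Finset.mem_univ _) (by
      rw [hs, Finset.card_univ, ← Nat.card_eq_fintype_card, ← Subgroup.index_eq_card]
      omega)
  obtain ⟨a, b, c, ha, hb, hc, hab, hac, hbc⟩ := Finset.two_lt_card_iff.mp hy
  have ha := (Finset.mem_filter.mp ha).2
  have hb := (Finset.mem_filter.mp hb).2
  have hc := (Finset.mem_filter.mp hc).2
  have hca : (Units.mk0 _ (hne a))⁻¹ * Units.mk0 _ (hne c) ∈ U :=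
    QuotientGroup.eq.mp (ha.trans hc.symm)
  have hba : (Units.mk0 _ (hne a))⁻¹ * Units.mk0 _ (hne b) ∈ U :=
    QuotientGroup.eq.mp (ha.trans hb.symm)
  have nA := hne a
  have nbc := hd b c hbc
  refine ⟨a, b, c, hab, hbc, hac, ⟨_, ?_, U.mul_mem (U.mul_mem (hdU a b hab)
    (U.inv_mem (hdU b c hbc))) hca⟩, ⟨_, ?_, U.mul_mem (U.mul_mem (hdU a c hac)
    (U.inv_mem (hdU b c hbc))) hba⟩, ?_⟩
  · simp only [Units.val_mul, Units.val_inv_eq_inv_val, Units.val_mk0]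
    field_simp
  · simp only [Units.val_mul, Units.val_inv_eq_inv_val, Units.val_mk0]
    field_simp
    ring
  · rintro ⟨t, ht⟩
    rw [div_mul_div_comm, eq_div_iff (mul_ne_zero nbc nA)] at ht
    by_cases hr : a - b = t * (b - c)
    · have hr' := congrArg (algebraMap κ 𝒦) hr
      simp only [map_sub, map_mul] at hr'
      have : (algebraMap κ 𝒦 a - algebraMap κ 𝒦 b) *
          (algebraMap κ 𝒦 a - algebraMap κ 𝒦 c) = 0 := by
        linear_combination -(g - algebraMap κ 𝒦 a) * hr' - ht
      exact mul_ne_zero (hd a b hab) (hd a c hac) this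
    · apply hg
      have hz := hd _ _ hr
      refine ⟨(c * (a - b) - a * (t * (b - c))) / ((a - b) - t * (b - c)), ?_⟩
      simp only [map_sub, map_mul, map_div₀] at hz ⊢
      rw [div_eq_iff hz]
      linear_combination ht
end

section
/- (Core of Lemma 4.12 (ii)) Let K be an infinite field and let H be a subfield of K such that the subgroup H^× = H ∖ {0} has finite index in the multiplicative group K^×. Then H = K. -/
/-- **Core of Lemma 4.12 (ii).** Let `K` be an infinite field and `H` a subfield of `K`
such that `H^× = H ∖ {0}` has finite index in the multiplicative group `K^×` (expressed
via the subgroup `U` of `Kˣ` consisting of the units lying in `H`). Then `H = K`. -/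
theorem subfield_of_finite_index_eq_top
    (K : Type) [Field K] [Infinite K] (H : Subfield K)
    (U : Subgroup Kˣ) (hU : ∀ x : Kˣ, x ∈ U ↔ (x : K) ∈ H)
    (hindex : U.index ≠ 0) :
    H = ⊤ := by
  have : Finite (Kˣ ⧸ U) := Subgroup.index_ne_zero_iff_finite.1 hindex
  have hinf : Infinite H := by
    by_contra hfin
    rw [not_infinite_iff_finite] at hfin
    have hUfin : Finite U := by
      refine Finite.of_injective (fun u : U => (⟨((u : Kˣ) : K), (hU u).1 u.2⟩ : H)) ?_
      intro u v huv
      exact Subtype.ext (Units.ext (congrArg Subtype.val huv))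
    have hKfin : Finite Kˣ := Finite.of_equiv _ (Subgroup.groupEquivQuotientProdSubgroup (s := U)).symm
    have hcover : (Set.univ : Set K) ⊆ insert 0 (Set.range (fun x : Kˣ => (x : K))) := by
      intro x _
      by_cases hx : x = 0
      · exact Or.inl hx
      · exact Or.inr ⟨Units.mk0 x hx, rfl⟩
    exact Set.infinite_univ (((Set.finite_range _).insert 0).subset hcover)
  rw [eq_top_iff]
  intro a _
  by_contra ha
  have hne : ∀ h : H, a + h ≠ 0 := by
    intro h h0
    apply ha
    rw [eq_neg_of_add_eq_zero_left h0]
    exact H.neg_mem h.2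
  obtain ⟨h, h', hhne, heq⟩ := Finite.exists_ne_map_eq_of_infinite
    (fun h : H => (QuotientGroup.mk (Units.mk0 (a + h) (hne h)) : Kˣ ⧸ U))
  have hmem := (hU _).1 (QuotientGroup.eq.1 heq)
  simp only [Units.val_mul, Units.val_inv_eq_inv_val, Units.val_mk0] at hmem
  set u := (a + (h : K))⁻¹ * (a + h') with hu
  have e : u * (a + h) = a + h' := by
    rw [hu]; field_simp [hne h]
  have hu1 : u - 1 ≠ 0 := by
    intro h1
    rw [sub_eq_zero.1 h1, one_mul] at e
    exact hhne (Subtype.ext (add_left_cancel e))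
  have key : a = (h' - u * h) / (u - 1) := by
    rw [eq_div_iff hu1]
    linear_combination e
  apply ha
  rw [key]
  exact H.div_mem (H.sub_mem h'.2 (H.mul_mem hmem h.2)) (H.sub_mem hmem H.one_mem)
end
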